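/- There exists ε₀ > 0 such that for every ε ∈ (0, ε₀), every integer q ≥ 1, and every η₁ > 0, there exist η ∈ (0, η₁) and a bijection G : ℝ² → ℝ² such that: (i) G and G⁻¹ are C^∞ and G preserves 2-dimensional Lebesgue measure; (ii) G(x + 1/q, y) = G(x, y) + (1/q, 0) for all (x,y); (iii) there exists δ > 0 with G(x, y) = (x, y) whenever |y| ≥ 1 − δ; (iv) ‖G(p) − p‖ ≤ ε and ‖G⁻¹(p) − p‖ ≤ ε for all p ∈ ℝ²; and (v) for every y ∈ [−1, 1], (1/2)·Leb{ y' ∈ [−1, 1] : for every 1-Lipschitz function φ : ℝ² → ℝ with φ(x+1, s) = φ(x, s) for all (x,s), ∫₀¹ φ(G(t, y)) dt − ∫₀¹ φ(G(t, y')) dt ≤ 3η } ≤ exp(−η^{−2+ε}). (Lemma 4.1: the emergence lemma on the cylinder.) -/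

import Mathlib

open MeasureTheory
open scoped ENNReal

/-- The Euclidean distance on the plane `ℝ × ℝ`. -/
noncomputable def euclDist (a b : ℝ × ℝ) : ℝ :=
  Real.sqrt ((a.1 - b.1) ^ 2 + (a.2 - b.2) ^ 2)

/-! ### Part A: determinants, area preservation -/

/-- The linear map of the plane with matrix `!![a, b; c, d]`. -/
noncomputable def linTwo (a b c d : ℝ) : ℝ × ℝ →L[ℝ] ℝ × ℝ :=
  (a • ContinuousLinearMap.fst ℝ ℝ ℝ + b • ContinuousLinearMap.snd ℝ ℝ ℝ).prod
    (c • ContinuousLinearMap.fst ℝ ℝ ℝ + d • ContinuousLinearMap.snd ℝ ℝ ℝ)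

lemma det_linTwo (a b c d : ℝ) : (linTwo a b c d).det = a * d - b * c := by
  have h : linTwo a b c d = LinearMap.toContinuousLinearMap
      (Matrix.toLin (Module.Basis.finTwoProd ℝ) (Module.Basis.finTwoProd ℝ) !![a, b; c, d]) := by
    ext <;> simp [linTwo, Matrix.toLin_finTwoProd_apply]
  rw [h]
  simp only [LinearMap.det_toContinuousLinearMap, LinearMap.det_toLin, Matrix.det_fin_two_of]

lemma det_comp' (A B : ℝ × ℝ →L[ℝ] ℝ × ℝ) : (A.comp B).det = A.det * B.det := by
  simp only [ContinuousLinearMap.det]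
  rw [ContinuousLinearMap.toLinearMap_comp, LinearMap.det_comp]

lemma det_id' : (ContinuousLinearMap.id ℝ (ℝ × ℝ)).det = 1 := by
  simp only [ContinuousLinearMap.det]
  exact LinearMap.det_id

/-- Smooth diffeomorphism of the plane with Jacobian determinant one. -/
structure AreaDiffeo (F : ℝ × ℝ ≃ ℝ × ℝ) : Prop where
  sm : ContDiff ℝ (⊤ : ℕ∞) ⇑F
  sm' : ContDiff ℝ (⊤ : ℕ∞) ⇑F.symm
  jac : ∀ p, (fderiv ℝ F p).det = 1

lemma AreaDiffeo.refl : AreaDiffeo (Equiv.refl _) := by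
  refine ⟨contDiff_id, contDiff_id, fun p => ?_⟩
  have : (⇑(Equiv.refl (ℝ × ℝ))) = id := rfl
  rw [this, fderiv_id, det_id']

lemma AreaDiffeo.diff {F : ℝ × ℝ ≃ ℝ × ℝ} (h : AreaDiffeo F) : Differentiable ℝ F :=
  h.sm.differentiable (by simp)

lemma AreaDiffeo.trans {F G : ℝ × ℝ ≃ ℝ × ℝ} (hF : AreaDiffeo F) (hG : AreaDiffeo G) :
    AreaDiffeo (F.trans G) := by
  refine ⟨hG.sm.comp hF.sm, hF.sm'.comp hG.sm', fun p => ?_⟩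
  rw [Equiv.coe_trans, fderiv_comp p (hG.diff _) (hF.diff _), det_comp', hG.jac, hF.jac, one_mul]

lemma AreaDiffeo.measurePreserving {F : ℝ × ℝ ≃ ℝ × ℝ} (h : AreaDiffeo F) :
    MeasurePreserving F volume volume := by
  refine ⟨h.sm.continuous.measurable, ?_⟩
  ext s hs
  rw [Measure.map_apply h.sm.continuous.measurable hs]
  have h1 := lintegral_abs_det_fderiv_eq_addHaar_image (f := F) (f' := fun p => fderiv ℝ F p)
    (s := F ⁻¹' s) volume (h.sm.continuous.measurable hs)
    (fun x _ => (h.diff x).hasFDerivAt.hasFDerivWithinAt) F.injective.injOn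
  simp only [h.jac, abs_one, ENNReal.ofReal_one, lintegral_const, one_mul] at h1
  rw [Measure.restrict_apply MeasurableSet.univ, Set.univ_inter,
    Set.image_preimage_eq _ F.surjective] at h1
  exact h1

/-! ### The function `2 s + sin 2 s` and its inverse -/

noncomputable def bFun (s : ℝ) : ℝ := 2 * s + Real.sin (2 * s)

lemma bFun_strictMono : StrictMono bFun := by
  intro a b hab
  have h1 : Real.sin (2 * b) - Real.sin (2 * a) = 2 * Real.sin (b - a) * Real.cos (b + a) := by
    rw [Real.sin_sub_sin]; congr 2 <;> ring_nf
  have h2 : |Real.sin (b - a)| < b - a := by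
    have := Real.abs_sin_lt_abs (x := b - a) (by linarith)
    rwa [abs_of_pos (by linarith : 0 < b - a)] at this
  have h3 : |Real.sin (b - a) * Real.cos (b + a)| ≤ |Real.sin (b - a)| := by
    rw [abs_mul]
    exact mul_le_of_le_one_right (abs_nonneg _) (Real.abs_cos_le_one _)
  have h4 := neg_abs_le (Real.sin (b - a) * Real.cos (b + a))
  unfold bFun
  nlinarith

lemma bFun_continuous : Continuous bFun := by unfold bFun; fun_prop

lemma bFun_surj : Function.Surjective bFun := by
  apply bFun_continuous.surjective
  · refine Filter.tendsto_atTop_mono (f := fun s : ℝ => 2 * s + (-1)) (fun s => ?_) ?_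
    · unfold bFun; linarith [Real.neg_one_le_sin (2 * s)]
    · exact Filter.tendsto_atTop_add_const_right _ _
        (Filter.tendsto_id.const_mul_atTop (by norm_num))
  · refine Filter.tendsto_atBot_mono (f := fun s : ℝ => 2 * s + 1) (fun s => ?_) ?_
    · unfold bFun; linarith [Real.sin_le_one (2 * s)]
    · exact Filter.tendsto_atBot_add_const_right _ _
        (Filter.tendsto_id.const_mul_atBot (by norm_num))

noncomputable def bHomeo : ℝ ≃ₜ ℝ := (StrictMono.orderIsoOfSurjective bFun bFun_strictMono
  bFun_surj).toHomeomorph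

lemma bHomeo_apply (s : ℝ) : bHomeo s = bFun s := rfl

noncomputable def sig (x : ℝ) : ℝ := bHomeo.symm x

lemma bFun_sig (x : ℝ) : bFun (sig x) = x := bHomeo.apply_symm_apply x
lemma sig_bFun (x : ℝ) : sig (bFun x) = x := bHomeo.symm_apply_apply x

lemma bFun_neg (x : ℝ) : bFun (-x) = - bFun x := by
  unfold bFun; rw [mul_neg, Real.sin_neg]; ring

lemma sig_neg (x : ℝ) : sig (-x) = - sig x := by
  apply bFun_strictMono.injective; rw [bFun_neg, bFun_sig, bFun_sig]

lemma bFun_pi : bFun (Real.pi / 2) = Real.pi := by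
  unfold bFun; rw [mul_div_cancel₀ _ two_ne_zero, Real.sin_pi, add_zero]

lemma bFun_zero : bFun 0 = 0 := by simp [bFun]

lemma bFun_hasDerivAt (s : ℝ) : HasDerivAt bFun (4 * Real.cos s ^ 2) s := by
  have h : HasDerivAt bFun (2 * 1 + Real.cos (2 * s) * (2 * 1)) s :=
    ((hasDerivAt_id s).const_mul 2).add (((hasDerivAt_id s).const_mul 2).sin)
  convert h using 1
  rw [Real.cos_two_mul]; ring

lemma bFun_contDiff {n : WithTop ℕ∞} : ContDiff ℝ n bFun := by unfold bFun; fun_prop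

/-- bounds on `sig` in the open interval -/
lemma sig_mem {u : ℝ} (h1 : -1 < u) (h2 : u < 1) :
    sig (Real.pi * u) ∈ Set.Ioo (-(Real.pi / 2)) (Real.pi / 2) := by
  have := Real.pi_pos
  constructor
  · rw [← bFun_strictMono.lt_iff_lt, bFun_sig, bFun_neg, bFun_pi]; nlinarith
  · rw [← bFun_strictMono.lt_iff_lt, bFun_sig, bFun_pi]; nlinarith

lemma cos_sig_pos {u : ℝ} (h1 : -1 < u) (h2 : u < 1) : 0 < Real.cos (sig (Real.pi * u)) :=
  Real.cos_pos_of_mem_Ioo (sig_mem h1 h2)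

lemma sig_contDiffAt {n : WithTop ℕ∞} {x : ℝ} (h : Real.cos (sig x) ≠ 0) : ContDiffAt ℝ n sig x := by
  refine bHomeo.toOpenPartialHomeomorph.contDiffAt_symm_deriv (f₀' := 4 * Real.cos (sig x) ^ 2)
    (by positivity) (by simp) ?_ ?_
  · exact bFun_hasDerivAt _
  · exact bFun_contDiff.contDiffAt

lemma sig_hasDerivAt {x : ℝ} (h : Real.cos (sig x) ≠ 0) :
    HasDerivAt sig (4 * Real.cos (sig x) ^ 2)⁻¹ x := by
  refine bHomeo.toOpenPartialHomeomorph.hasDerivAt_symm (f' := 4 * Real.cos (sig x) ^ 2)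
    (by simp) (by positivity) ?_
  exact bFun_hasDerivAt _

/-! ### Part B: the area preserving chart from the square to the disc and twist maps -/

/-- open square -/
def sqU : Set (ℝ × ℝ) := Set.Ioo (-1) 1 ×ˢ Set.Ioo (-1) 1
/-- open unit disc -/
def dsk : Set (ℝ × ℝ) := {P | P.1 ^ 2 + P.2 ^ 2 < 1}

noncomputable def psi (p : ℝ × ℝ) : ℝ × ℝ :=
  (Real.sin (sig (Real.pi * p.1)), p.2 * Real.cos (sig (Real.pi * p.1)))
noncomputable def psiInv (P : ℝ × ℝ) : ℝ × ℝ :=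
  (bFun (Real.arcsin P.1) / Real.pi, P.2 / Real.sqrt (1 - P.1 ^ 2))
noncomputable def rot (a : ℝ) (P : ℝ × ℝ) : ℝ × ℝ :=
  (P.1 * Real.cos a - P.2 * Real.sin a, P.1 * Real.sin a + P.2 * Real.cos a)

lemma isOpen_sqU : IsOpen sqU := isOpen_Ioo.prod isOpen_Ioo
lemma isOpen_dsk : IsOpen dsk := isOpen_lt (by fun_prop) (by fun_prop)

lemma mem_sqU {p : ℝ × ℝ} : p ∈ sqU ↔ (-1 < p.1 ∧ p.1 < 1) ∧ (-1 < p.2 ∧ p.2 < 1) := Iff.rfl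

lemma psi_mem {p : ℝ × ℝ} (hp : p ∈ sqU) : psi p ∈ dsk := by
  obtain ⟨⟨h1, h2⟩, h3, h4⟩ := hp
  have hc := cos_sig_pos h1 h2
  show Real.sin _ ^ 2 + (p.2 * Real.cos _) ^ 2 < 1
  have h5 : p.2 ^ 2 < 1 := by nlinarith
  have := Real.sin_sq_add_cos_sq (sig (Real.pi * p.1))
  have : 0 < Real.cos (sig (Real.pi * p.1)) ^ 2 := by positivity
  nlinarith

lemma dsk_fst {P : ℝ × ℝ} (hP : P ∈ dsk) : -1 < P.1 ∧ P.1 < 1 := by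
  have h : P.1 ^ 2 + P.2 ^ 2 < 1 := hP
  constructor <;> nlinarith [sq_nonneg P.2]

lemma dsk_pos {P : ℝ × ℝ} (hP : P ∈ dsk) : 0 < 1 - P.1 ^ 2 := by
  have h : P.1 ^ 2 + P.2 ^ 2 < 1 := hP
  nlinarith [sq_nonneg P.2]

lemma arcsin_mem {P : ℝ × ℝ} (hP : P ∈ dsk) :
    Real.arcsin P.1 ∈ Set.Ioo (-(Real.pi / 2)) (Real.pi / 2) := by
  obtain ⟨h1, h2⟩ := dsk_fst hP
  exact ⟨Real.neg_pi_div_two_lt_arcsin.2 h1, Real.arcsin_lt_pi_div_two.2 h2⟩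

lemma psiInv_mem {P : ℝ × ℝ} (hP : P ∈ dsk) : psiInv P ∈ sqU := by
  obtain ⟨h3, h4⟩ := arcsin_mem hP
  have hpi := Real.pi_pos
  have hs := Real.sqrt_pos.2 (dsk_pos hP)
  have h5 := bFun_strictMono h3
  have h6 := bFun_strictMono h4
  rw [bFun_neg, bFun_pi] at h5
  rw [bFun_pi] at h6
  have h7 : |P.2| < Real.sqrt (1 - P.1 ^ 2) := by
    apply Real.lt_sqrt_of_sq_lt
    have h : P.1 ^ 2 + P.2 ^ 2 < 1 := hP
    rw [sq_abs]; linarith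
  rw [abs_lt] at h7
  refine ⟨⟨?_, ?_⟩, ?_, ?_⟩
  · show -1 < _ / _
    rw [lt_div_iff₀ hpi]; linarith
  · show _ / _ < 1
    rw [div_lt_iff₀ hpi]; linarith
  · show -1 < _ / _
    rw [lt_div_iff₀ hs]; linarith
  · show _ / _ < 1
    rw [div_lt_iff₀ hs]; linarith

lemma psiInv_psi {p : ℝ × ℝ} (hp : p ∈ sqU) : psiInv (psi p) = p := by
  obtain ⟨⟨h1, h2⟩, h3, h4⟩ := hp
  have hc := cos_sig_pos h1 h2
  have hm := sig_mem h1 h2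
  have hpi := Real.pi_pos
  unfold psiInv psi
  ext
  · simp only
    rw [Real.arcsin_sin hm.1.le hm.2.le, bFun_sig]
    field_simp
  · simp only
    rw [← Real.cos_eq_sqrt_one_sub_sin_sq hm.1.le hm.2.le]
    field_simp

lemma psi_psiInv {P : ℝ × ℝ} (hP : P ∈ dsk) : psi (psiInv P) = P := by
  obtain ⟨h1, h2⟩ := dsk_fst hP
  have hpi := Real.pi_pos
  have hs := Real.sqrt_pos.2 (dsk_pos hP)
  have h : sig (Real.pi * (bFun (Real.arcsin P.1) / Real.pi)) = Real.arcsin P.1 := by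
    rw [mul_div_cancel₀ _ hpi.ne', sig_bFun]
  unfold psiInv psi
  ext
  · simp only
    rw [h, Real.sin_arcsin h1.le h2.le]
  · simp only
    rw [h, Real.cos_arcsin]
    field_simp

lemma psi_contDiffAt {p : ℝ × ℝ} (hp : p ∈ sqU) : ContDiffAt ℝ (⊤ : ℕ∞) psi p := by
  have hc := cos_sig_pos hp.1.1 hp.1.2
  have hs : ContDiffAt ℝ (⊤ : ℕ∞) (fun p : ℝ × ℝ => sig (Real.pi * p.1)) p :=
    ContDiffAt.comp (g := sig) (f := fun p : ℝ × ℝ => Real.pi * p.1) p (sig_contDiffAt hc.ne')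
      (by fun_prop)
  unfold psi
  exact (hs.sin).prodMk (contDiffAt_snd.mul hs.cos)

lemma psiInv_contDiffAt {P : ℝ × ℝ} (hP : P ∈ dsk) : ContDiffAt ℝ (⊤ : ℕ∞) psiInv P := by
  obtain ⟨h1, h2⟩ := dsk_fst hP
  have hs := Real.sqrt_pos.2 (dsk_pos hP)
  have ha : ContDiffAt ℝ (⊤ : ℕ∞) (fun P : ℝ × ℝ => Real.arcsin P.1) P :=
    ContDiffAt.comp (g := Real.arcsin) (f := fun P : ℝ × ℝ => P.1) P
      (Real.contDiffAt_arcsin h1.ne' h2.ne) contDiffAt_fst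
  have hb : ContDiffAt ℝ (⊤ : ℕ∞) (fun P : ℝ × ℝ => bFun (Real.arcsin P.1)) P :=
    ContDiffAt.comp (g := bFun) (f := fun P : ℝ × ℝ => Real.arcsin P.1) P
      bFun_contDiff.contDiffAt ha
  have hq : ContDiffAt ℝ (⊤ : ℕ∞) (fun P : ℝ × ℝ => Real.sqrt (1 - P.1 ^ 2)) P :=
    ContDiffAt.sqrt (by fun_prop) (dsk_pos hP).ne'
  unfold psiInv
  exact (hb.div_const _).prodMk (contDiffAt_snd.div hq hs.ne')

lemma psi_hasFDerivAt {p : ℝ × ℝ} (hp : p ∈ sqU) :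
    (fderiv ℝ psi p).det = Real.pi / 4 := by
  have hc := cos_sig_pos hp.1.1 hp.1.2
  set s := sig (Real.pi * p.1) with hs
  have h1 : HasFDerivAt (fun p : ℝ × ℝ => Real.pi * p.1)
      (Real.pi • ContinuousLinearMap.fst ℝ ℝ ℝ) p := hasFDerivAt_fst.const_mul _
  have h2 := (sig_hasDerivAt (x := Real.pi * p.1) hc.ne').comp_hasFDerivAt p h1
  have h3 := h2.sin
  have h4 := (hasFDerivAt_snd (𝕜 := ℝ) (p := p)).mul h2.cos
  have h5 : HasFDerivAt psi _ p := h3.prodMk h4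
  have h6 : fderiv ℝ psi p = linTwo (Real.cos s * ((4 * Real.cos s ^ 2)⁻¹ * Real.pi)) 0
    (p.2 * (-Real.sin s * ((4 * Real.cos s ^ 2)⁻¹ * Real.pi))) (Real.cos s) := by
    rw [h5.fderiv]
    ext <;> simp [linTwo, ← hs]
  rw [h6, det_linTwo]
  field_simp
  ring

lemma psiInv_det {P : ℝ × ℝ} (hP : P ∈ dsk) : (fderiv ℝ psiInv P).det * (Real.pi / 4) = 1 := by
  have hm := psiInv_mem hP
  have h1 := psi_hasFDerivAt hm
  rw [← h1, ← det_comp']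
  have hd2 : DifferentiableAt ℝ psi (psiInv P) := (psi_contDiffAt hm).differentiableAt (by simp)
  have hd1 : DifferentiableAt ℝ psiInv (psi (psiInv P)) := by
    rw [psi_psiInv hP]
    exact (psiInv_contDiffAt hP).differentiableAt (by simp)
  have h2 := fderiv_comp (psiInv P) hd1 hd2
  rw [psi_psiInv hP] at h2
  rw [← h2]
  have h3 : (psiInv ∘ psi) =ᶠ[nhds (psiInv P)] id := by
    filter_upwards [isOpen_sqU.mem_nhds hm] with x hx using psiInv_psi hx
  rw [h3.fderiv_eq, fderiv_id, det_id']

/-! twist -/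

noncomputable def tw (θ : ℝ → ℝ) (P : ℝ × ℝ) : ℝ × ℝ := rot (θ (P.1 ^ 2 + P.2 ^ 2)) P

lemma rot_normSq (a : ℝ) (P : ℝ × ℝ) :
    (rot a P).1 ^ 2 + (rot a P).2 ^ 2 = P.1 ^ 2 + P.2 ^ 2 := by
  have := Real.sin_sq_add_cos_sq a
  have h : (rot a P).1 ^ 2 + (rot a P).2 ^ 2
    = (P.1 ^ 2 + P.2 ^ 2) * (Real.sin a ^ 2 + Real.cos a ^ 2) := by unfold rot; ring
  rw [h, this, mul_one]

lemma rot_rot (a b : ℝ) (P : ℝ × ℝ) : rot a (rot b P) = rot (a + b) P := by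
  unfold rot
  ext <;> simp only [Real.cos_add, Real.sin_add] <;> ring

lemma rot_zero (P : ℝ × ℝ) : rot 0 P = P := by unfold rot; ext <;> simp

lemma rot_mem {a : ℝ} {P : ℝ × ℝ} (hP : P ∈ dsk) : rot a P ∈ dsk := by
  show (_ : ℝ) < _
  rw [rot_normSq]; exact hP

lemma tw_mem {θ : ℝ → ℝ} {P : ℝ × ℝ} (hP : P ∈ dsk) : tw θ P ∈ dsk := rot_mem hP

lemma tw_tw (θ θ' : ℝ → ℝ) (h : ∀ r, θ r + θ' r = 0) (P : ℝ × ℝ) : tw θ (tw θ' P) = P := by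
  unfold tw
  rw [rot_normSq, rot_rot, h, rot_zero]

lemma tw_contDiff {θ : ℝ → ℝ} (h : ContDiff ℝ (⊤ : ℕ∞) θ) : ContDiff ℝ (⊤ : ℕ∞) (tw θ) := by
  have ha : ContDiff ℝ (⊤ : ℕ∞) (fun P : ℝ × ℝ => θ (P.1 ^ 2 + P.2 ^ 2)) :=
    h.comp (by fun_prop)
  have hs := ha.sin
  have hc := ha.cos
  unfold tw rot
  exact ((contDiff_fst.mul hc).sub (contDiff_snd.mul hs)).prodMk
    ((contDiff_fst.mul hs).add (contDiff_snd.mul hc))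

lemma tw_det {θ : ℝ → ℝ} (h : ContDiff ℝ (⊤ : ℕ∞) θ) (P : ℝ × ℝ) :
    (fderiv ℝ (tw θ) P).det = 1 := by
  obtain ⟨X, Y⟩ := P
  have hd : HasDerivAt θ (deriv θ (X ^ 2 + Y ^ 2)) (X ^ 2 + Y ^ 2) :=
    ((h.differentiable (by simp)) _).hasDerivAt
  set d := deriv θ (X ^ 2 + Y ^ 2)
  have hfst := hasFDerivAt_fst (𝕜 := ℝ) (p := (X, Y))
  have hsnd := hasFDerivAt_snd (𝕜 := ℝ) (p := (X, Y))
  have ha := HasDerivAt.comp_hasFDerivAt (h₂ := θ) (f := fun P : ℝ × ℝ => P.1 ^ 2 + P.2 ^ 2) (X, Y)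
    hd ((hfst.pow 2).add (hsnd.pow 2))
  have h5 : HasFDerivAt (tw θ) _ (X, Y) := ((hfst.mul ha.cos).sub (hsnd.mul ha.sin)).prodMk
    ((hfst.mul ha.sin).add (hsnd.mul ha.cos))
  set a := θ (X ^ 2 + Y ^ 2) with haa
  have h6 : fderiv ℝ (tw θ) (X, Y) = linTwo
    (Real.cos a - (X * Real.sin a + Y * Real.cos a) * (2 * X * d))
    (- Real.sin a - (X * Real.sin a + Y * Real.cos a) * (2 * Y * d))
    (Real.sin a + (X * Real.cos a - Y * Real.sin a) * (2 * X * d))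
    (Real.cos a + (X * Real.cos a - Y * Real.sin a) * (2 * Y * d)) := by
    rw [h5.fderiv]
    ext <;> simp [linTwo, ← haa] <;> ring
  rw [h6, det_linTwo]
  have := Real.sin_sq_add_cos_sq a
  linear_combination this

/-! ### Part C: twist block in the square -/

lemma sqU_margin {K : Set (ℝ × ℝ)} (hK : IsCompact K) (hKU : K ⊆ sqU) :
    ∃ ρ : ℝ, 0 < ρ ∧ ρ < 1 ∧ ∀ p ∈ K, |p.1| < ρ ∧ |p.2| < ρ := by
  rcases K.eq_empty_or_nonempty with rfl | hne
  · exact ⟨1 / 2, by norm_num, by norm_num, by simp⟩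
  obtain ⟨x, hx, hmax⟩ := hK.exists_isMaxOn hne
    (f := fun p : ℝ × ℝ => max |p.1| |p.2|) (by fun_prop)
  have hxU := mem_sqU.1 (hKU hx)
  have h1 : max |x.1| |x.2| < 1 := max_lt (abs_lt.2 hxU.1) (abs_lt.2 hxU.2)
  have h0 : 0 ≤ max |x.1| |x.2| := le_max_of_le_left (abs_nonneg _)
  refine ⟨(max |x.1| |x.2| + 1) / 2, by linarith, by linarith, fun p hp => ?_⟩
  have h2 : max |p.1| |p.2| ≤ max |x.1| |x.2| := hmax hp
  have h3 := le_max_left |p.1| |p.2|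
  have h4 := le_max_right |p.1| |p.2|
  constructor <;> linarith

open Classical in
noncomputable def tq (θ : ℝ → ℝ) (p : ℝ × ℝ) : ℝ × ℝ :=
  if p ∈ sqU then psiInv (tw θ (psi p)) else p

lemma tq_tq (θ θ' : ℝ → ℝ) (h : ∀ r, θ r + θ' r = 0) (p : ℝ × ℝ) : tq θ (tq θ' p) = p := by
  by_cases hp : p ∈ sqU
  · have h1 : tq θ' p = psiInv (tw θ' (psi p)) := if_pos hp
    have h2 : tw θ' (psi p) ∈ dsk := tw_mem (psi_mem hp)
    rw [h1]
    unfold tq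
    rw [if_pos (psiInv_mem h2), psi_psiInv h2, tw_tw _ _ h, psiInv_psi hp]
  · have h1 : tq θ' p = p := if_neg hp
    rw [h1]; exact if_neg hp

noncomputable def tqEquiv (θ : ℝ → ℝ) : ℝ × ℝ ≃ ℝ × ℝ where
  toFun := tq θ
  invFun := tq (fun r => - θ r)
  left_inv := fun p => tq_tq _ _ (fun r => by simp) p
  right_inv := fun p => tq_tq _ _ (fun r => by simp) p

lemma tq_eq_id {θ : ℝ → ℝ} {r₁ : ℝ} (hr : ∀ r, r₁ ≤ r → θ r = 0) {p : ℝ × ℝ}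
    (hp : p ∉ psiInv '' {P | P.1 ^ 2 + P.2 ^ 2 ≤ r₁}) : tq θ p = p := by
  by_cases hU : p ∈ sqU
  · unfold tq
    rw [if_pos hU]
    have h1 : r₁ < (psi p).1 ^ 2 + (psi p).2 ^ 2 := by
      by_contra h
      exact hp ⟨psi p, not_lt.1 h, psiInv_psi hU⟩
    unfold tw
    rw [hr _ h1.le, rot_zero, psiInv_psi hU]
  · exact if_neg hU

lemma compact_disc (r₁ : ℝ) (h1 : r₁ < 1) :
    IsCompact (psiInv '' {P : ℝ × ℝ | P.1 ^ 2 + P.2 ^ 2 ≤ r₁}) := by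
  apply IsCompact.image_of_continuousOn
  · apply Metric.isCompact_of_isClosed_isBounded
    · exact isClosed_le (by fun_prop) (by fun_prop)
    · refine (Metric.isBounded_closedBall (x := (0 : ℝ × ℝ)) (r := 1)).subset ?_
      intro P hP
      have hP' : P.1 ^ 2 + P.2 ^ 2 ≤ r₁ := hP
      rw [mem_closedBall_zero_iff, Prod.norm_def]
      apply max_le <;> rw [Real.norm_eq_abs, abs_le] <;> constructor <;>
        nlinarith [sq_nonneg P.1, sq_nonneg P.2]
  · intro P hP
    have hP' : P.1 ^ 2 + P.2 ^ 2 ≤ r₁ := hP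
    have hd : P ∈ dsk := lt_of_le_of_lt hP' h1
    exact (psiInv_contDiffAt hd).continuousAt.continuousWithinAt

lemma tq_local {θ : ℝ → ℝ} {r₁ : ℝ} (h1 : r₁ < 1) (hr : ∀ r, r₁ ≤ r → θ r = 0) (p : ℝ × ℝ) :
    (p ∈ sqU ∧ tq θ =ᶠ[nhds p] (psiInv ∘ tw θ ∘ psi)) ∨ tq θ =ᶠ[nhds p] id := by
  by_cases hU : p ∈ sqU
  · left
    refine ⟨hU, ?_⟩
    filter_upwards [isOpen_sqU.mem_nhds hU] with x hx
    exact if_pos hx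
  · right
    have hp : p ∈ (psiInv '' {P : ℝ × ℝ | P.1 ^ 2 + P.2 ^ 2 ≤ r₁})ᶜ := by
      rintro ⟨P, hP, rfl⟩
      exact hU (psiInv_mem (lt_of_le_of_lt hP h1))
    filter_upwards [(compact_disc r₁ h1).isClosed.isOpen_compl.mem_nhds hp] with x hx
    exact tq_eq_id hr hx

lemma tq_contDiff {θ : ℝ → ℝ} {r₁ : ℝ} (h1 : r₁ < 1) (hr : ∀ r, r₁ ≤ r → θ r = 0)
    (hθ : ContDiff ℝ (⊤ : ℕ∞) θ) : ContDiff ℝ (⊤ : ℕ∞) (tq θ) := by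
  rw [contDiff_iff_contDiffAt]
  intro p
  rcases tq_local h1 hr p with ⟨hU, h⟩ | h
  · refine ContDiffAt.congr_of_eventuallyEq ?_ h
    exact (psiInv_contDiffAt (tw_mem (psi_mem hU))).comp p
      ((tw_contDiff hθ).contDiffAt.comp p (psi_contDiffAt hU))
  · exact contDiffAt_id.congr_of_eventuallyEq h

lemma tq_det {θ : ℝ → ℝ} {r₁ : ℝ} (h1 : r₁ < 1) (hr : ∀ r, r₁ ≤ r → θ r = 0)
    (hθ : ContDiff ℝ (⊤ : ℕ∞) θ) (p : ℝ × ℝ) : (fderiv ℝ (tq θ) p).det = 1 := by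
  rcases tq_local h1 hr p with ⟨hU, h⟩ | h
  · have d1 := (psi_contDiffAt hU).differentiableAt (by simp)
    have d2 := (tw_contDiff hθ).differentiable (by simp) (psi p)
    have hm : tw θ (psi p) ∈ dsk := tw_mem (psi_mem hU)
    have d3 := (psiInv_contDiffAt hm).differentiableAt (by simp)
    rw [h.fderiv_eq, fderiv_comp p d3 (d2.comp p d1), fderiv_comp p d2 d1, det_comp', det_comp',
      tw_det hθ, psi_hasFDerivAt hU, one_mul]
    exact psiInv_det hm
  · rw [h.fderiv_eq, fderiv_id, det_id']

lemma block (α : ℝ) {K : Set (ℝ × ℝ)} (hK : IsCompact K) (hKU : K ⊆ sqU) :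
    ∃ T : ℝ × ℝ ≃ ℝ × ℝ, AreaDiffeo T ∧
      (∃ ρ : ℝ, 0 < ρ ∧ ρ < 1 ∧ ∀ p : ℝ × ℝ, (ρ ≤ |p.1| ∨ ρ ≤ |p.2|) → T p = p) ∧
      ∀ p ∈ K, T p = psiInv (rot α (psi p)) := by
  obtain ⟨r₀, hr₀, hr₀K⟩ : ∃ r₀ : ℝ, r₀ < 1 ∧ ∀ p ∈ K, (psi p).1 ^ 2 + (psi p).2 ^ 2 ≤ r₀ := by
    rcases K.eq_empty_or_nonempty with rfl | hne
    · exact ⟨0, by norm_num, by simp⟩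
    obtain ⟨x, hx, hmax⟩ := hK.exists_isMaxOn hne
      (f := fun p : ℝ × ℝ => (psi p).1 ^ 2 + (psi p).2 ^ 2) (by
        have : ContinuousOn psi K := fun p hp =>
          (psi_contDiffAt (hKU hp)).continuousAt.continuousWithinAt
        exact (this.fst.pow 2).add (this.snd.pow 2))
    exact ⟨_, psi_mem (hKU hx), fun p hp => hmax hp⟩
  set r₁ := (r₀ + 1) / 2 with hr₁
  have hr1 : r₁ < 1 := by rw [hr₁]; linarith
  have hr01 : 0 < r₁ - r₀ := by rw [hr₁]; linarith
  set θ : ℝ → ℝ := fun r => α * (1 - Real.smoothTransition ((r - r₀) / (r₁ - r₀))) with hθ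
  have hθs : ContDiff ℝ (⊤ : ℕ∞) θ := by
    have : ContDiff ℝ (⊤ : ℕ∞) (fun r => Real.smoothTransition ((r - r₀) / (r₁ - r₀))) :=
      Real.smoothTransition.contDiff.comp (by fun_prop)
    exact contDiff_const.mul (contDiff_const.sub this)
  have hθ0 : ∀ r, r ≤ r₀ → θ r = α := by
    intro r h
    simp only [hθ]
    rw [Real.smoothTransition.zero_of_nonpos]
    · ring
    · exact div_nonpos_of_nonpos_of_nonneg (by linarith) hr01.le
  have hθ1 : ∀ r, r₁ ≤ r → θ r = 0 := by
    intro r h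
    simp only [hθ]
    rw [Real.smoothTransition.one_of_one_le]
    · ring
    · rw [le_div_iff₀ hr01]; linarith
  refine ⟨tqEquiv θ, ⟨tq_contDiff hr1 hθ1 hθs, ?_, tq_det hr1 hθ1 hθs⟩, ?_, ?_⟩
  · exact tq_contDiff (θ := fun r => - θ r) hr1 (fun r h => by simp [hθ1 r h]) hθs.neg
  · obtain ⟨ρ, h0, h1, h⟩ := sqU_margin (compact_disc r₁ hr1) (by
      rintro _ ⟨P, hP, rfl⟩
      exact psiInv_mem (lt_of_le_of_lt hP hr1))
    refine ⟨ρ, h0, h1, fun p hp => tq_eq_id hθ1 (fun hpC => ?_)⟩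
    have := h p hpC
    rcases hp with hp | hp <;> linarith
  · intro p hp
    show tq θ p = _
    unfold tq
    rw [if_pos (hKU hp)]
    unfold tw
    rw [hθ0 _ (hr₀K p hp)]

/-- half turn -/
lemma half_turn {p : ℝ × ℝ} (hp : p ∈ sqU) : psiInv (rot Real.pi (psi p)) = -p := by
  have h : rot Real.pi (psi p) = psi (-p) := by
    unfold rot psi
    ext <;> simp [sig_neg]
  have hn : -p ∈ sqU := by
    rw [mem_sqU] at hp ⊢
    simp only [Prod.fst_neg, Prod.snd_neg]
    refine ⟨⟨?_, ?_⟩, ?_, ?_⟩ <;> linarith [hp.1.1, hp.1.2, hp.2.1, hp.2.2]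
  rw [h, psiInv_psi hn]

lemma psiInv_fst_pos {P : ℝ × ℝ} (h : 0 < P.1) : 0 < (psiInv P).1 := by
  unfold psiInv
  have := bFun_strictMono (Real.arcsin_pos.2 h)
  rw [bFun_zero] at this
  exact div_pos this Real.pi_pos

lemma psiInv_fst_neg {P : ℝ × ℝ} (h : P.1 < 0) : (psiInv P).1 < 0 := by
  unfold psiInv
  have := bFun_strictMono (Real.arcsin_lt_zero.2 h)
  rw [bFun_zero] at this
  exact div_neg_of_neg_of_pos this Real.pi_pos

/-- angle attached to a bit -/
noncomputable def ang (b : Bool) : ℝ := if b then Real.pi / 2 else -(Real.pi / 2)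

lemma rot_ang (b : Bool) (P : ℝ × ℝ) : (rot (ang b) P).1 = if b then - P.2 else P.2 := by
  cases b <;> simp [ang, rot]

/-- quarter turn: the half of the square decides the side. -/
lemma quarter_turn {p : ℝ × ℝ} (hp : p ∈ sqU) (b : Bool) (hv : p.2 ≠ 0) :
    (xor b (decide (0 < p.2)) = true → 0 < (psiInv (rot (ang b) (psi p))).1) ∧
    (xor b (decide (0 < p.2)) = false → (psiInv (rot (ang b) (psi p))).1 < 0) := by
  have hc := cos_sig_pos hp.1.1 hp.1.2
  have h2 : (psi p).2 = p.2 * Real.cos (sig (Real.pi * p.1)) := rfl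
  rcases lt_or_gt_of_ne hv with h | h
  · have h3 : (psi p).2 < 0 := by rw [h2]; exact mul_neg_of_neg_of_pos h hc
    cases b
    · simp only [not_lt.2 h.le, decide_false, Bool.xor_false, Bool.false_eq_true, false_imp_iff,
        true_and, forall_true_left]
      apply psiInv_fst_neg; rw [rot_ang]; simpa using h3
    · simp only [not_lt.2 h.le, decide_false, Bool.xor_false, forall_true_left,
        Bool.true_eq_false, false_imp_iff, and_true]
      apply psiInv_fst_pos; rw [rot_ang]; simpa using h3
  · have h3 : 0 < (psi p).2 := by rw [h2]; exact mul_pos h hc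
    cases b
    · simp only [h, decide_true, Bool.xor_true, Bool.not_false, forall_true_left,
        Bool.true_eq_false, false_imp_iff, and_true]
      apply psiInv_fst_pos; rw [rot_ang]; simpa using h3
    · simp only [h, decide_true, Bool.xor_true, Bool.not_true, Bool.false_eq_true, false_imp_iff,
        true_and, forall_true_left]
      apply psiInv_fst_neg; rw [rot_ang]; simpa using h3

/-! ### Part D: rectangles and periodization -/

noncomputable def affE (cx cy rx ry : ℝ) (hrx : rx ≠ 0) (hry : ry ≠ 0) : ℝ × ℝ ≃ ℝ × ℝ where
  toFun p := (cx + rx * p.1, cy + ry * p.2)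
  invFun p := ((p.1 - cx) / rx, (p.2 - cy) / ry)
  left_inv p := by ext <;> simp <;> field_simp
  right_inv p := by ext <;> simp <;> field_simp <;> ring

lemma AreaDiffeo.conj {T : ℝ × ℝ ≃ ℝ × ℝ} (hT : AreaDiffeo T) (cx cy rx ry : ℝ) (hrx : rx ≠ 0)
    (hry : ry ≠ 0) :
    AreaDiffeo ((affE cx cy rx ry hrx hry).symm.trans (T.trans (affE cx cy rx ry hrx hry))) := by
  set E := affE cx cy rx ry hrx hry
  have s1 : ContDiff ℝ (⊤ : ℕ∞) E := by
    show ContDiff ℝ (⊤ : ℕ∞) (fun p : ℝ × ℝ => (cx + rx * p.1, cy + ry * p.2))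
    fun_prop
  have s2 : ContDiff ℝ (⊤ : ℕ∞) E.symm := by
    show ContDiff ℝ (⊤ : ℕ∞) (fun p : ℝ × ℝ => ((p.1 - cx) / rx, (p.2 - cy) / ry))
    fun_prop
  have d1 : Differentiable ℝ E := s1.differentiable (by simp)
  have d2 : Differentiable ℝ E.symm := s2.differentiable (by simp)
  refine ⟨s1.comp (hT.sm.comp s2), s1.comp (hT.sm'.comp s2), fun p => ?_⟩
  have f1 : ∀ p, (fderiv ℝ E p).det = rx * ry := by
    intro p
    have hfst := hasFDerivAt_fst (𝕜 := ℝ) (E := ℝ) (F := ℝ) (p := p)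
    have hsnd := hasFDerivAt_snd (𝕜 := ℝ) (E := ℝ) (F := ℝ) (p := p)
    have h1 : HasFDerivAt E _ p := ((hfst.const_mul rx).const_add cx).prodMk
      ((hsnd.const_mul ry).const_add cy)
    have : fderiv ℝ E p = linTwo rx 0 0 ry := by
      rw [h1.fderiv]; ext <;> simp [linTwo]
    rw [this, det_linTwo]; ring
  have f2 : (fderiv ℝ E.symm p).det = rx⁻¹ * ry⁻¹ := by
    have hfst := hasFDerivAt_fst (𝕜 := ℝ) (E := ℝ) (F := ℝ) (p := p)
    have hsnd := hasFDerivAt_snd (𝕜 := ℝ) (E := ℝ) (F := ℝ) (p := p)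
    have h1 : HasFDerivAt (fun p : ℝ × ℝ => (rx⁻¹ * (p.1 - cx), ry⁻¹ * (p.2 - cy))) _ p :=
      ((hfst.sub_const cx).const_mul rx⁻¹).prodMk
      ((hsnd.sub_const cy).const_mul ry⁻¹)
    have h0 : ⇑E.symm = (fun p : ℝ × ℝ => (rx⁻¹ * (p.1 - cx), ry⁻¹ * (p.2 - cy))) := by
      funext p
      show ((p.1 - cx) / rx, (p.2 - cy) / ry) = _
      ext <;> simp <;> ring
    have : fderiv ℝ E.symm p = linTwo rx⁻¹ 0 0 ry⁻¹ := by
      rw [h0, h1.fderiv]; ext <;> simp [linTwo]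
    rw [this, det_linTwo]; ring
  rw [Equiv.coe_trans, Equiv.coe_trans, fderiv_comp p ((d1 _).comp _ (hT.diff _)) (d2 _),
    fderiv_comp _ (d1 _) (hT.diff _), det_comp', det_comp', f1, f2, hT.jac]
  field_simp

noncomputable def per (q : ℕ) (cx : ℝ) (T : ℝ × ℝ → ℝ × ℝ) (p : ℝ × ℝ) : ℝ × ℝ :=
  T (p.1 - (round (q * (p.1 - cx)) : ℤ) / (q : ℝ), p.2) +
    (((round (q * (p.1 - cx)) : ℤ) : ℝ) / (q : ℝ), 0)

lemma fix_symm {T : ℝ × ℝ ≃ ℝ × ℝ} {p : ℝ × ℝ} (h : T p = p) : T.symm p = p := by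
  rw [Equiv.symm_apply_eq, h]

lemma round_of_lt {z : ℝ} {k : ℤ} (h : |z - k| < 1 / 2) : round z = k := by
  have h1 : round (z - k) = 0 := by
    rw [round_eq_zero_iff]; rw [abs_lt] at h; exact ⟨by linarith, by linarith⟩
  rw [round_sub_intCast] at h1; omega

section perSec
variable {q : ℕ} {cx a : ℝ}

lemma per_eval (hq : 1 ≤ q) (T : ℝ × ℝ → ℝ × ℝ) {x y : ℝ} (m : ℤ) (hx : |x - cx| < 1 / (2 * q)) :
    per q cx T (x + m / q, y) = T (x, y) + ((m : ℝ) / q, 0) := by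
  have hq0 : (0 : ℝ) < q := by exact_mod_cast hq
  have h : round ((q : ℝ) * (x + m / q - cx)) = m := by
    apply round_of_lt
    have : (q : ℝ) * (x + m / q - cx) - m = q * (x - cx) := by field_simp; ring
    rw [this, abs_mul, abs_of_pos hq0]
    calc (q : ℝ) * |x - cx| < q * (1 / (2 * q)) := by gcongr
      _ = 1 / 2 := by field_simp
  unfold per
  simp only [h]
  congr 2
  ext <;> simp

lemma per_per (hq : 1 ≤ q) (T : ℝ × ℝ ≃ ℝ × ℝ) (ha : a < 1 / (2 * q))
    (hT : ∀ p : ℝ × ℝ, a ≤ |p.1 - cx| → T p = p) (p : ℝ × ℝ) :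
    per q cx T.symm (per q cx T p) = p := by
  have hq0 : (0 : ℝ) < q := by exact_mod_cast hq
  set k := round ((q : ℝ) * (p.1 - cx)) with hk
  have e1 : per q cx T p = T (p.1 - k / q, p.2) + ((k : ℝ) / q, 0) := rfl
  by_cases h : T (p.1 - k / q, p.2) = (p.1 - k / q, p.2)
  · have e2 : per q cx T p = p := by rw [e1, h]; ext <;> simp
    rw [e2]
    show T.symm (p.1 - k / q, p.2) + ((k : ℝ) / q, 0) = p
    rw [fix_symm h]; ext <;> simp
  · have h2 : |(T (p.1 - k / q, p.2)).1 - cx| < a := by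
      by_contra h3
      exact h (T.injective (hT _ (not_lt.1 h3)))
    have e3 : per q cx T p = ((T (p.1 - k / q, p.2)).1 + k / q, (T (p.1 - k / q, p.2)).2) := by
      rw [e1]; ext <;> simp
    rw [e3, per_eval hq _ k (h2.trans ha)]
    simp only [Prod.mk.eta, Equiv.symm_apply_apply]
    ext <;> simp

lemma per_local (hq : 1 ≤ q) (T : ℝ × ℝ → ℝ × ℝ) (ha : a < 1 / (2 * q))
    (hT : ∀ p : ℝ × ℝ, a ≤ |p.1 - cx| → T p = p) (p : ℝ × ℝ) :
    (∃ k : ℝ, per q cx T =ᶠ[nhds p] fun x => T (x - (k, 0)) + (k, 0)) ∨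
      per q cx T =ᶠ[nhds p] id := by
  have hq0 : (0 : ℝ) < q := by exact_mod_cast hq
  have hqa : q * a < 1 / 2 := by
    calc (q : ℝ) * a < q * (1 / (2 * q)) := by gcongr
      _ = 1 / 2 := by field_simp
  set k := round ((q : ℝ) * (p.1 - cx)) with hk
  have hr := abs_sub_round ((q : ℝ) * (p.1 - cx))
  rw [← hk] at hr
  rcases hr.lt_or_eq with h | h
  · left
    refine ⟨k / q, ?_⟩
    have ho : IsOpen {x : ℝ × ℝ | |(q : ℝ) * (x.1 - cx) - k| < 1 / 2} :=
      isOpen_lt (by fun_prop) (by fun_prop)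
    filter_upwards [ho.mem_nhds h] with x hx
    unfold per
    rw [round_of_lt hx]
    congr 2
    ext <;> simp
  · right
    have ho : IsOpen {x : ℝ × ℝ | |x.1 - p.1| * q < 1 / 2 - q * a} :=
      isOpen_lt (by fun_prop) (by fun_prop)
    have hp : p ∈ {x : ℝ × ℝ | |x.1 - p.1| * q < 1 / 2 - q * a} := by
      simp only [Set.mem_setOf_eq, sub_self, abs_zero, zero_mul]; linarith
    filter_upwards [ho.mem_nhds hp] with x hx
    set k' := round ((q : ℝ) * (x.1 - cx)) with hk'
    have e1 : per q cx T x = T (x.1 - k' / q, x.2) + ((k' : ℝ) / q, 0) := rfl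
    have hfar : a ≤ |x.1 - k' / q - cx| := by
      by_contra hlt
      have hlt' : |(q : ℝ) * (x.1 - cx) - k'| < q * a := by
        have : (q : ℝ) * (x.1 - cx) - k' = q * (x.1 - k' / q - cx) := by field_simp; ring
        rw [this, abs_mul, abs_of_pos hq0]
        have := not_le.1 hlt
        gcongr
      have hx' : |(q : ℝ) * (x.1 - cx) - q * (p.1 - cx)| < 1 / 2 - q * a := by
        have : (q : ℝ) * (x.1 - cx) - q * (p.1 - cx) = (x.1 - p.1) * q := by ring
        rw [this, abs_mul, abs_of_pos hq0]; exact hx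
      rw [abs_lt] at hlt' hx'
      obtain ⟨a1, a2⟩ := hlt'
      obtain ⟨b1, b2⟩ := hx'
      rcases abs_eq (by norm_num : (0 : ℝ) ≤ 1 / 2) |>.1 h with h | h
      · have c1 : (k : ℝ) < k' := by linarith
        have c2 : (k' : ℝ) < k + 1 := by linarith
        have c1' : k < k' := by exact_mod_cast c1
        have c2' : k' < k + 1 := by exact_mod_cast c2
        omega
      · have c1 : (k : ℝ) - 1 < k' := by linarith
        have c2 : (k' : ℝ) < k := by linarith
        have c1' : k - 1 < k' := by exact_mod_cast c1
        have c2' : k' < k := by exact_mod_cast c2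
        omega
    rw [e1, hT _ hfar]
    ext <;> simp

lemma per_contDiff (hq : 1 ≤ q) {T : ℝ × ℝ → ℝ × ℝ} (ha : a < 1 / (2 * q))
    (hT : ∀ p : ℝ × ℝ, a ≤ |p.1 - cx| → T p = p) (hs : ContDiff ℝ (⊤ : ℕ∞) T) :
    ContDiff ℝ (⊤ : ℕ∞) (per q cx T) := by
  rw [contDiff_iff_contDiffAt]
  intro p
  rcases per_local hq T ha hT p with ⟨k, h⟩ | h
  · refine ContDiffAt.congr_of_eventuallyEq ?_ h
    exact ((hs.comp (contDiff_id.sub contDiff_const)).add contDiff_const).contDiffAt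
  · exact contDiffAt_id.congr_of_eventuallyEq h

lemma per_det (hq : 1 ≤ q) {T : ℝ × ℝ → ℝ × ℝ} (ha : a < 1 / (2 * q))
    (hT : ∀ p : ℝ × ℝ, a ≤ |p.1 - cx| → T p = p)
    (hd : ∀ p, (fderiv ℝ T p).det = 1) (p : ℝ × ℝ) : (fderiv ℝ (per q cx T) p).det = 1 := by
  rcases per_local hq T ha hT p with ⟨k, h⟩ | h
  · rw [h.fderiv_eq, fderiv_add_const, fderiv_comp_sub]
    exact hd _
  · rw [h.fderiv_eq, fderiv_id, det_id']

end perSec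

/-- The admissible diffeomorphisms -/
structure Adm (q : ℕ) (F : ℝ × ℝ ≃ ℝ × ℝ) : Prop where
  area : AreaDiffeo F
  comm : ∀ x y : ℝ, F (x + 1 / q, y) = F (x, y) + ((1 / q : ℝ), (0 : ℝ))
  bdry : ∃ δ > 0, ∀ x y : ℝ, 1 - δ ≤ |y| → F (x, y) = (x, y)

lemma Adm.refl (q : ℕ) : Adm q (Equiv.refl _) :=
  ⟨AreaDiffeo.refl, fun x y => by ext <;> simp, 1, one_pos, fun _ _ _ => rfl⟩

lemma Adm.trans {q : ℕ} {F G : ℝ × ℝ ≃ ℝ × ℝ} (hF : Adm q F) (hG : Adm q G) :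
    Adm q (F.trans G) := by
  refine ⟨hF.area.trans hG.area, fun x y => ?_, ?_⟩
  · simp only [Equiv.trans_apply]
    rw [hF.comm]
    have := hG.comm (F (x, y)).1 (F (x, y)).2
    simp only [Prod.mk.eta] at this
    rw [← this]
    congr 1
    ext <;> simp
  · obtain ⟨d1, h1, k1⟩ := hF.bdry
    obtain ⟨d2, h2, k2⟩ := hG.bdry
    refine ⟨min d1 d2, lt_min h1 h2, fun x y h => ?_⟩
    have := min_le_left d1 d2
    have := min_le_right d1 d2
    simp only [Equiv.trans_apply]
    rw [k1 x y (by linarith), k2 x y (by linarith)]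

/-- periodic rectangle -/
def perRect (q : ℕ) (cx cy rx ry : ℝ) : Set (ℝ × ℝ) :=
  {p | (∃ m : ℤ, |p.1 - cx - m / q| < rx) ∧ |p.2 - cy| < ry}

lemma rectBlock {q : ℕ} (hq : 1 ≤ q) (cx cy : ℝ) {rx ry : ℝ} (hrx : 0 < rx) (hry : 0 < ry)
    (hrx' : rx ≤ 1 / (2 * q)) (hcy : |cy| + ry ≤ 1) (α : ℝ) {K : Set (ℝ × ℝ)} (hK : IsCompact K)
    (hKU : K ⊆ sqU) :
    ∃ F : ℝ × ℝ ≃ ℝ × ℝ, Adm q F ∧ (∀ p, p ∉ perRect q cx cy rx ry → F p = p) ∧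
      (∀ p, |(F p).1 - p.1| ≤ 2 * rx ∧ |(F p).2 - p.2| ≤ 2 * ry) ∧
      ∀ (u v : ℝ) (m : ℤ), (u, v) ∈ K → F (cx + rx * u + m / q, cy + ry * v) =
        (cx + rx * (psiInv (rot α (psi (u, v)))).1 + m / q,
          cy + ry * (psiInv (rot α (psi (u, v)))).2) := by
  have hq0 : (0 : ℝ) < q := by exact_mod_cast hq
  obtain ⟨T₀, hT₀, ⟨ρ, hρ0, hρ1, hρ⟩, hTK⟩ := block α hK hKU
  set E := affE cx cy rx ry hrx.ne' hry.ne' with hE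
  set T := E.symm.trans (T₀.trans E) with hTdef
  have hT : AreaDiffeo T := hT₀.conj _ _ _ _ _ _
  have hfix : ∀ p : ℝ × ℝ, (rx * ρ ≤ |p.1 - cx| ∨ ry * ρ ≤ |p.2 - cy|) → T p = p := by
    intro p hp
    have : T₀ (E.symm p) = E.symm p := by
      apply hρ
      show ρ ≤ |(p.1 - cx) / rx| ∨ ρ ≤ |(p.2 - cy) / ry|
      rw [abs_div, abs_div, abs_of_pos hrx, abs_of_pos hry, le_div_iff₀ hrx, le_div_iff₀ hry,
        mul_comm ρ, mul_comm ρ]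
      exact hp
    show E (T₀ (E.symm p)) = p
    rw [this, Equiv.apply_symm_apply]
  have ha : rx * ρ < 1 / (2 * q) := by nlinarith
  have hfx : ∀ p : ℝ × ℝ, rx * ρ ≤ |p.1 - cx| → T p = p := fun p hp => hfix p (Or.inl hp)
  have hfx' : ∀ p : ℝ × ℝ, rx * ρ ≤ |p.1 - cx| → T.symm p = p := fun p hp => fix_symm (hfx p hp)
  let F : ℝ × ℝ ≃ ℝ × ℝ :=
    { toFun := per q cx T
      invFun := per q cx T.symm
      left_inv := per_per hq T ha hfx
      right_inv := per_per hq T.symm ha hfx' }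
  have hFa : ∀ p, F p = T (p.1 - (round ((q : ℝ) * (p.1 - cx)) : ℤ) / (q : ℝ), p.2) +
    (((round ((q : ℝ) * (p.1 - cx)) : ℤ) : ℝ) / (q : ℝ), 0) := fun p => rfl
  refine ⟨F, ⟨⟨per_contDiff hq ha hfx hT.sm, per_contDiff hq ha hfx' hT.sm',
    per_det hq ha hfx hT.jac⟩, ?_, ?_⟩, ?_, ?_, ?_⟩
  · intro x y
    rw [hFa, hFa]
    have : round ((q : ℝ) * (x + 1 / q - cx)) = round ((q : ℝ) * (x - cx)) + 1 := by
      rw [← round_add_one]; congr 1; field_simp; ring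
    simp only [this]
    push_cast
    rw [add_assoc]
    congr 1
    · congr 2; ring
    · ext <;> simp; ring
  · refine ⟨ry * (1 - ρ), by nlinarith, fun x y hy => ?_⟩
    rw [hFa, hfix _ (Or.inr ?_)]
    · ext <;> simp
    · have := abs_sub_abs_le_abs_sub y cy
      show ry * ρ ≤ |y - cy|
      linarith
  · intro p hp
    rw [hFa, hfix]
    · ext <;> simp
    · by_contra hcon
      push Not at hcon
      apply hp
      refine ⟨⟨round ((q : ℝ) * (p.1 - cx)), lt_of_lt_of_le ?_ ((mul_lt_of_lt_one_right hrx hρ1).le)⟩,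
        lt_of_lt_of_le hcon.2 ((mul_lt_of_lt_one_right hry hρ1).le)⟩
      · have := hcon.1
        simp only at this
        convert this using 2
        ring
  · intro p
    rw [hFa]
    set k : ℝ := (((round ((q : ℝ) * (p.1 - cx)) : ℤ) : ℝ) / (q : ℝ))
    by_cases h : T (p.1 - k, p.2) = (p.1 - k, p.2)
    · rw [h]; simp [hrx.le, hry.le]
    · have h1 : |p.1 - k - cx| < rx * ρ ∧ |p.2 - cy| < ry * ρ := by
        by_contra hcon
        rw [not_and_or, not_lt, not_lt] at hcon
        exact h (hfix _ hcon)
      have h2 : |(T (p.1 - k, p.2)).1 - cx| < rx * ρ ∧ |(T (p.1 - k, p.2)).2 - cy| < ry * ρ := by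
        by_contra hcon
        rw [not_and_or, not_lt, not_lt] at hcon
        exact h (T.injective (hfix _ hcon))
      have e1 := mul_lt_of_lt_one_right hrx hρ1
      have e2 := mul_lt_of_lt_one_right hry hρ1
      simp only [Prod.fst_add, Prod.snd_add, abs_lt, abs_le] at h1 h2 ⊢
      refine ⟨⟨?_, ?_⟩, ?_, ?_⟩ <;> linarith [h1.1.1, h1.1.2, h1.2.1, h1.2.2, h2.1.1, h2.1.2,
        h2.2.1, h2.2.2]
  · intro u v m huv
    have hU := mem_sqU.1 (hKU huv)
    have e1 : |rx * u| < rx := by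
      rw [abs_mul, abs_of_pos hrx]; exact mul_lt_of_lt_one_right hrx (abs_lt.2 hU.1)
    show per q cx T (cx + rx * u + m / q, cy + ry * v) = _
    rw [per_eval hq T m (by simpa using e1.trans_le hrx')]
    have e2 : T (cx + rx * u, cy + ry * v) = E (T₀ (u, v)) := by
      show E (T₀ (E.symm (E (u, v)))) = _
      rw [Equiv.symm_apply_apply]
    rw [e2, hTK _ huv]
    show (_, _) + (_, _) = _
    ext <;> simp

/-- glueing finitely many maps with disjoint supports -/
lemma glue {ι : Type*} [DecidableEq ι] {q : ℕ} (s : Finset ι) (R : ι → Set (ℝ × ℝ))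
    (F : ι → (ℝ × ℝ ≃ ℝ × ℝ))
    (hF : ∀ i ∈ s, Adm q (F i)) (hR : ∀ i ∈ s, ∀ p, p ∉ R i → F i p = p)
    (hdis : ∀ i ∈ s, ∀ j ∈ s, ∀ p, p ∈ R i → p ∈ R j → i = j) :
    ∃ G : ℝ × ℝ ≃ ℝ × ℝ, Adm q G ∧ (∀ i ∈ s, ∀ p ∈ R i, G p = F i p) ∧
      ∀ p, (∀ i ∈ s, p ∉ R i) → G p = p := by
  induction s using Finset.induction_on with
  | empty => exact ⟨Equiv.refl _, Adm.refl q, by simp, fun _ _ => rfl⟩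
  | insert i s his ih =>
    obtain ⟨G, h1, h2, h3⟩ := ih (fun j hj => hF j (Finset.mem_insert_of_mem hj))
      (fun j hj => hR j (Finset.mem_insert_of_mem hj))
      (fun j hj k hk => hdis j (Finset.mem_insert_of_mem hj) k (Finset.mem_insert_of_mem hk))
    have hi := Finset.mem_insert_self i s
    have hne : ∀ p ∈ R i, G p = p := by
      intro p hp
      refine h3 p (fun j hj hpj => ?_)
      have := hdis i hi j (Finset.mem_insert_of_mem hj) p hp hpj
      exact his (this ▸ hj)
    refine ⟨G.trans (F i), h1.trans (hF i hi), ?_, ?_⟩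
    · intro j hj p hp
      rw [Equiv.trans_apply]
      rcases Finset.mem_insert.1 hj with rfl | hj'
      · rw [hne p hp]
      · rw [h2 j hj' p hp]
        apply hR i hi
        intro hmem
        -- F j p ∈ R i, hence fixed by G, hence p = F j p
        have e1 : G (F j p) = F j p := hne _ hmem
        have e2 : G p = F j p := h2 j hj' p hp
        have e3 : p = F j p := G.injective (e2.trans e1.symm)
        rw [← e3] at hmem
        have := hdis i hi j hj p hmem hp
        exact his (this ▸ hj')
    · intro p hp
      rw [Equiv.trans_apply, h3 p (fun j hj => hp j (Finset.mem_insert_of_mem hj))]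
      exact hR i hi p (hp i hi)

/-! ### Part E: grid maps -/

lemma col_unique {w x : ℝ} (hw : 0 < w) {a b : ℤ} (h1 : |x - w * (a + 1 / 2)| < w / 2)
    (h2 : |x - w * (b + 1 / 2)| < w / 2) : a = b := by
  rw [abs_lt] at h1 h2
  have e1 : w * (a - b - 1 : ℝ) < w * 0 := by nlinarith
  have e2 : w * (b - a - 1 : ℝ) < w * 0 := by nlinarith
  have e3 := lt_of_mul_lt_mul_left e1 hw.le
  have e4 := lt_of_mul_lt_mul_left e2 hw.le
  have e5 : a - b - 1 < 0 := by exact_mod_cast e3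
  have e6 : b - a - 1 < 0 := by exact_mod_cast e4
  omega

lemma gridMap {ι : Type*} [DecidableEq ι] {q P : ℕ} (hq : 1 ≤ q) (hP : 1 ≤ P) (s : Finset ι)
    (col : ι → ℕ) (lo hi α : ι → ℝ) (D : ℝ) (hD0 : 0 ≤ D) (hcol : ∀ i ∈ s, col i < P)
    (hlo : ∀ i ∈ s, -1 ≤ lo i) (hhi : ∀ i ∈ s, hi i ≤ 1) (hlh : ∀ i ∈ s, lo i < hi i)
    (hD : ∀ i ∈ s, hi i - lo i ≤ D)
    (hdis : ∀ i ∈ s, ∀ j ∈ s, col i = col j → ∀ y, lo i < y → y < hi i → lo j < y → y < hi j →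
      i = j)
    {K : Set (ℝ × ℝ)} (hK : IsCompact K) (hKU : K ⊆ sqU) :
    ∃ F : ℝ × ℝ ≃ ℝ × ℝ, Adm q F ∧
      (∀ p, |(F p).1 - p.1| ≤ 1 / (q * P) ∧ |(F p).2 - p.2| ≤ D) ∧
      ∀ i ∈ s, ∀ (m : ℤ) (u v : ℝ), (u, v) ∈ K →
        F (1 / (q * P) * (col i + P * m + 1 / 2 + u / 2), (lo i + hi i) / 2 + (hi i - lo i) / 2 * v) =
        (1 / (q * P) * (col i + P * m + 1 / 2 + (psiInv (rot (α i) (psi (u, v)))).1 / 2),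
          (lo i + hi i) / 2 + (hi i - lo i) / 2 * (psiInv (rot (α i) (psi (u, v)))).2) := by
  have hq0 : (0 : ℝ) < q := by exact_mod_cast hq
  have hP0 : (0 : ℝ) < P := by exact_mod_cast hP
  have hP1 : (1 : ℝ) ≤ P := by exact_mod_cast hP
  set w : ℝ := 1 / (q * P) with hw
  have hw0 : 0 < w := by positivity
  have hwP : w * P = 1 / q := by rw [hw]; field_simp
  have hrx' : w / 2 ≤ 1 / (2 * q) := by
    have : w ≤ w * P := by nlinarith
    rw [hwP] at this
    have e : (1 : ℝ) / (2 * q) = 1 / q / 2 := by field_simp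
    rw [e]; linarith
  have hex : ∀ i, ∃ F : ℝ × ℝ ≃ ℝ × ℝ, i ∈ s → Adm q F ∧
      (∀ p, p ∉ perRect q (w * (col i + 1 / 2)) ((lo i + hi i) / 2) (w / 2) ((hi i - lo i) / 2) →
        F p = p) ∧
      (∀ p, |(F p).1 - p.1| ≤ 2 * (w / 2) ∧ |(F p).2 - p.2| ≤ 2 * ((hi i - lo i) / 2)) ∧
      ∀ (u v : ℝ) (m : ℤ), (u, v) ∈ K → F (w * (col i + 1 / 2) + w / 2 * u + m / q,
        (lo i + hi i) / 2 + (hi i - lo i) / 2 * v) =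
        (w * (col i + 1 / 2) + w / 2 * (psiInv (rot (α i) (psi (u, v)))).1 + m / q,
          (lo i + hi i) / 2 + (hi i - lo i) / 2 * (psiInv (rot (α i) (psi (u, v)))).2) := by
    intro i
    by_cases hi' : i ∈ s
    · have a1 := hlo i hi'
      have a2 := hhi i hi'
      have a3 := hlh i hi'
      obtain ⟨F, hF⟩ := rectBlock hq (w * (col i + 1 / 2)) ((lo i + hi i) / 2)
        (rx := w / 2) (ry := (hi i - lo i) / 2) (by positivity) (by linarith) hrx'
        (by
          have : |(lo i + hi i) / 2| ≤ 1 - (hi i - lo i) / 2 := abs_le.2 ⟨by linarith, by linarith⟩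
          linarith) (α i) hK hKU
      exact ⟨F, fun _ => hF⟩
    · exact ⟨Equiv.refl _, fun h => absurd h hi'⟩
  choose F hF using hex
  have hcolm : ∀ (i : ι) (m : ℤ) (x : ℝ), x - w * (col i + 1 / 2) - m / q =
      x - w * (((col i + P * m : ℤ) : ℝ) + 1 / 2) := by
    intro i m x
    push_cast
    have : (m : ℝ) / q = w * P * m := by rw [hwP]; ring
    rw [this]; ring
  obtain ⟨G, hG, hG1, hG2⟩ := glue s (fun i => perRect q (w * (col i + 1 / 2))
    ((lo i + hi i) / 2) (w / 2) ((hi i - lo i) / 2)) F (fun i hi => (hF i hi).1)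
    (fun i hi => (hF i hi).2.1) (by
      intro i hi' j hj p hpi hpj
      obtain ⟨⟨m, hm⟩, h1⟩ := hpi
      obtain ⟨⟨m', hm'⟩, h2⟩ := hpj
      rw [hcolm] at hm hm'
      have e := col_unique hw0 hm hm'
      have c1 := hcol i hi'
      have c2 := hcol j hj
      have hc : col i = col j := by
        have e1 : ((col i + P * m : ℤ)) % P = col i := by
          rw [Int.add_mul_emod_self_left]
          exact Int.emod_eq_of_lt (by positivity) (by exact_mod_cast c1)
        have e2 : ((col j + P * m' : ℤ)) % P = col j := by
          rw [Int.add_mul_emod_self_left]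
          exact Int.emod_eq_of_lt (by positivity) (by exact_mod_cast c2)
        rw [e, e2] at e1
        exact_mod_cast e1.symm
      rw [abs_lt] at h1 h2
      exact hdis i hi' j hj hc p.2 (by linarith [h1.1]) (by linarith [h1.2]) (by linarith [h2.1])
        (by linarith [h2.2]))
  refine ⟨G, hG, ?_, ?_⟩
  · intro p
    by_cases h : ∃ i ∈ s, p ∈ perRect q (w * (col i + 1 / 2))
        ((lo i + hi i) / 2) (w / 2) ((hi i - lo i) / 2)
    · obtain ⟨i, his, hp⟩ := h
      rw [hG1 i his p hp]
      have := (hF i his).2.2.1 p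
      have h2 := hD i his
      exact ⟨by linarith [this.1], by linarith [this.2]⟩
    · push Not at h
      rw [hG2 p h]
      simp [hw0.le, hD0]
  · intro i his m u v huv
    have hU := mem_sqU.1 (hKU huv)
    have e1 : ∀ z : ℝ, w * (col i + P * m + 1 / 2 + z / 2) =
        w * (col i + 1 / 2) + w / 2 * z + m / q := by
      intro z
      have : (m : ℝ) / q = w * P * m := by rw [hwP]; ring
      rw [this]; ring
    rw [e1, e1, hG1 i his, (hF i his).2.2.2 u v m huv]
    have a3 := hlh i his
    refine ⟨⟨m, ?_⟩, ?_⟩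
    · rw [abs_lt]; constructor <;> simp only <;> nlinarith
    · rw [abs_lt]; constructor <;> simp only <;> nlinarith

lemma turn_mem {p : ℝ × ℝ} (hp : p ∈ sqU) (a : ℝ) : psiInv (rot a (psi p)) ∈ sqU :=
  psiInv_mem (rot_mem (psi_mem hp))

lemma turn_cont {a : ℝ} : ContinuousOn (fun p => psiInv (rot a (psi p))) sqU := by
  intro p hp
  refine ContinuousAt.continuousWithinAt ?_
  have h1 := (psi_contDiffAt hp).continuousAt
  have h2 : Continuous (rot a) := by unfold rot; fun_prop
  have h3 := (psiInv_contDiffAt (rot_mem (a := a) (psi_mem hp))).continuousAt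
  exact ContinuousAt.comp (f := fun p => rot a (psi p)) h3 (h2.continuousAt.comp h1)

/-- core of the quarter turns -/
def coreH (β : ℝ) : Set (ℝ × ℝ) := {p | |p.1| ≤ 49 / 50 ∧ β ≤ |p.2| ∧ |p.2| ≤ 1 - β}

lemma coreH_compact {β : ℝ} (hβ : 0 < β) : IsCompact (coreH β) := by
  apply Metric.isCompact_of_isClosed_isBounded
  · have h1 : IsClosed {p : ℝ × ℝ | |p.1| ≤ 49 / 50} := isClosed_le (by fun_prop) (by fun_prop)
    have h2 : IsClosed {p : ℝ × ℝ | β ≤ |p.2|} := isClosed_le (by fun_prop) (by fun_prop)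
    have h3 : IsClosed {p : ℝ × ℝ | |p.2| ≤ 1 - β} := isClosed_le (by fun_prop) (by fun_prop)
    exact h1.inter (h2.inter h3)
  · refine (Metric.isBounded_closedBall (x := (0 : ℝ × ℝ)) (r := 1)).subset ?_
    intro p hp
    rw [mem_closedBall_zero_iff, Prod.norm_def]
    exact max_le (by rw [Real.norm_eq_abs]; linarith [hp.1])
      (by rw [Real.norm_eq_abs]; linarith [hp.2.2])

lemma coreH_sub {β : ℝ} (hβ : 0 < β) : coreH β ⊆ sqU := by
  intro p hp
  rw [mem_sqU]
  exact ⟨abs_lt.1 (by linarith [hp.1]), abs_lt.1 (by linarith [hp.2.2])⟩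

lemma turn_margin {β : ℝ} (hβ : 0 < β) (b : Bool) : ∃ ρ : ℝ, 0 < ρ ∧ ρ < 1 ∧ ∀ p ∈ coreH β,
    |(psiInv (rot (ang b) (psi p))).1| ≤ 1 - ρ ∧ |(psiInv (rot (ang b) (psi p))).2| ≤ 1 - ρ ∧
    ρ ≤ |(psiInv (rot (ang b) (psi p))).1| := by
  have hc := coreH_compact hβ
  have hs := coreH_sub hβ
  have hcont := (turn_cont (a := ang b)).mono hs
  obtain ⟨r, hr0, hr1, hr⟩ := sqU_margin (hc.image_of_continuousOn hcont) (by
    rintro _ ⟨p, hp, rfl⟩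
    exact turn_mem (hs hp) _)
  rcases (coreH β).eq_empty_or_nonempty with he | hne
  · exact ⟨1 / 2, by norm_num, by norm_num, by simp [he]⟩
  · obtain ⟨p₀, hp₀, hmin⟩ := hc.exists_isMinOn hne
      (f := fun p => |(psiInv (rot (ang b) (psi p))).1|) (by
        exact (continuous_abs.comp continuous_fst).comp_continuousOn hcont)
    have hne : ∀ p ∈ coreH β, 0 < |(psiInv (rot (ang b) (psi p))).1| := by
      intro p hp
      have hv : p.2 ≠ 0 := by
        intro h; have := hp.2.1; rw [h, abs_zero] at this; linarith
      have := quarter_turn (hs hp) b hv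
      rw [abs_pos]
      cases hx : xor b (decide (0 < p.2))
      · exact (this.2 hx).ne
      · exact (this.1 hx).ne'
    refine ⟨min (1 - r) |(psiInv (rot (ang b) (psi p₀))).1|, lt_min (by linarith) (hne _ hp₀),
      lt_of_le_of_lt (min_le_left _ _) (by linarith), fun p hp => ?_⟩
    have h1 := hr _ ⟨p, hp, rfl⟩
    have h2 := min_le_left (1 - r) |(psiInv (rot (ang b) (psi p₀))).1|
    simp only at h1
    refine ⟨by linarith [h1.1], by linarith [h1.2], (min_le_right _ _).trans (hmin hp)⟩

/-! ### Part F: the two maps -/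

lemma Hmap {q N M : ℕ} (hq : 1 ≤ q) (hN : 1 ≤ N) (hM : 1 ≤ M) (W : ℕ → ℕ → Bool) {β : ℝ}
    (hβ : 0 < β) :
    ∃ ρ : ℝ, 0 < ρ ∧ ρ < 1 ∧ ∃ H : ℝ × ℝ ≃ ℝ × ℝ, Adm q H ∧
      (∀ p, |(H p).1 - p.1| ≤ 1 / (q * N) ∧ |(H p).2 - p.2| ≤ 2 / M) ∧
      ∀ (J : ℤ) (k : ℕ), k < M → ∀ u v : ℝ, |u| ≤ 49 / 50 → β ≤ |v| → |v| ≤ 1 - β →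
        ∃ u' v' : ℝ, H (1 / (q * N) * (J + 1 / 2 + u / 2), -1 + 2 / M * (k + 1 / 2 + v / 2)) =
          (1 / (q * N) * (J + 1 / 2 + u' / 2), -1 + 2 / M * (k + 1 / 2 + v' / 2)) ∧ |v'| ≤ 1 - ρ ∧
          (xor (W k (J % N).toNat) (decide (0 < v)) = true → ρ ≤ u' ∧ u' ≤ 1 - ρ) ∧
          (xor (W k (J % N).toNat) (decide (0 < v)) = false → -(1 - ρ) ≤ u' ∧ u' ≤ -ρ) := by
  have hM0 : (0 : ℝ) < M := by exact_mod_cast hM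
  have hN0 : (0 : ℝ) < N := by exact_mod_cast hN
  set τ : ℝ := 2 / M with hτ
  have hτ0 : 0 < τ := by positivity
  have hτM : τ * M = 2 := by rw [hτ]; field_simp
  obtain ⟨H, hH, hdisp, hev⟩ := gridMap (ι := ℕ × ℕ) hq hN (Finset.range N ×ˢ Finset.range M)
    (fun i => i.1) (fun i => -1 + τ * i.2) (fun i => -1 + τ * (i.2 + 1))
    (fun i => ang (W i.2 i.1)) τ hτ0.le
    (fun i hi => by simpa using (Finset.mem_product.1 hi).1)
    (fun i hi => by nlinarith [(Nat.cast_nonneg i.2 : (0 : ℝ) ≤ i.2)])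
    (fun i hi => by
      have h1 : i.2 + 1 ≤ M := by
        have := (Finset.mem_product.1 hi).2; simp at this; omega
      have h2 : (i.2 : ℝ) + 1 ≤ M := by exact_mod_cast h1
      nlinarith)
    (fun i hi => by nlinarith)
    (fun i hi => by nlinarith)
    (by
      rintro ⟨i, k⟩ h1 ⟨j, l⟩ h2 rfl y h3 h4 h5 h6
      simp only at h3 h4 h5 h6
      have e1 : τ * (k : ℝ) < τ * (l + 1) := by linarith
      have e2 : τ * (l : ℝ) < τ * (k + 1) := by linarith
      have e3 := lt_of_mul_lt_mul_left e1 hτ0.le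
      have e4 := lt_of_mul_lt_mul_left e2 hτ0.le
      have e5 : k < l + 1 := by exact_mod_cast e3
      have e6 : l < k + 1 := by exact_mod_cast e4
      have : k = l := by omega
      rw [this]) (coreH_compact hβ) (coreH_sub hβ)
  obtain ⟨r1, a1, b1, c1⟩ := turn_margin hβ true
  obtain ⟨r2, a2, b2, c2⟩ := turn_margin hβ false
  have hmar : ∀ b, ∀ p ∈ coreH β,
    |(psiInv (rot (ang b) (psi p))).1| ≤ 1 - min r1 r2 ∧
    |(psiInv (rot (ang b) (psi p))).2| ≤ 1 - min r1 r2 ∧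
    min r1 r2 ≤ |(psiInv (rot (ang b) (psi p))).1| := by
    intro b p hp
    have m1 := min_le_left r1 r2
    have m2 := min_le_right r1 r2
    cases b
    · obtain ⟨x, y, z⟩ := c2 p hp
      exact ⟨by linarith, by linarith, by linarith⟩
    · obtain ⟨x, y, z⟩ := c1 p hp
      exact ⟨by linarith, by linarith, by linarith⟩
  refine ⟨min r1 r2, lt_min a1 a2, lt_of_le_of_lt (min_le_left _ _) b1, H, hH, hdisp, ?_⟩
  intro J k hk u v hu hv hv'
  set i : ℕ := (J % N).toNat with hi
  have hNZ : (0 : ℤ) < N := by exact_mod_cast hN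
  have hi0 : (i : ℤ) = J % N := Int.toNat_of_nonneg (Int.emod_nonneg _ hNZ.ne')
  have hiN : i < N := by
    have := Int.emod_lt_of_pos J hNZ
    omega
  have hJ : (J : ℝ) = i + N * (J / N : ℤ) := by
    have : J = i + N * (J / N) := by rw [hi0]; exact (Int.emod_add_mul_ediv J N).symm
    exact_mod_cast this
  have huv : ((u, v) : ℝ × ℝ) ∈ coreH β := ⟨hu, hv, hv'⟩
  have := hev (i, k) (by simp [hiN, hk]) (J / N) u v huv
  simp only at this
  obtain ⟨m1, m2, m3⟩ := hmar (W k i) _ huv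
  have hv0 : v ≠ 0 := by
    intro h; rw [h, abs_zero] at hv; linarith
  have hqt := quarter_turn (coreH_sub hβ huv) (W k i) hv0
  simp only at hqt
  set w := psiInv (rot (ang (W k i)) (psi (u, v)))
  refine ⟨w.1, w.2, ?_, m2, ?_, ?_⟩
  · rw [hJ]
    convert this using 2
    · ring
    · ring
  · intro h
    have h0 := hqt.1 h
    rw [abs_of_pos h0] at m1 m3
    exact ⟨m3, m1⟩
  · intro h
    have h0 := hqt.2 h
    rw [abs_of_neg h0] at m1 m3
    exact ⟨by linarith, by linarith⟩

def coreS (ρ : ℝ) : Set (ℝ × ℝ) := {p | |p.1| ≤ 1 - ρ ∧ |p.2| ≤ 1 - ρ}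

lemma coreS_compact {β : ℝ} (hβ : 0 < β) : IsCompact (coreS β) := by
  apply Metric.isCompact_of_isClosed_isBounded
  · have h1 : IsClosed {p : ℝ × ℝ | |p.1| ≤ 1 - β} := isClosed_le (by fun_prop) (by fun_prop)
    have h3 : IsClosed {p : ℝ × ℝ | |p.2| ≤ 1 - β} := isClosed_le (by fun_prop) (by fun_prop)
    exact h1.inter h3
  · refine (Metric.isBounded_closedBall (x := (0 : ℝ × ℝ)) (r := 1)).subset ?_
    intro p hp
    rw [mem_closedBall_zero_iff, Prod.norm_def]
    exact max_le (by rw [Real.norm_eq_abs]; linarith [hp.1])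
      (by rw [Real.norm_eq_abs]; linarith [hp.2])

lemma coreS_sub {β : ℝ} (hβ : 0 < β) : coreS β ⊆ sqU := by
  intro p hp
  rw [mem_sqU]
  exact ⟨abs_lt.1 (by linarith [hp.1]), abs_lt.1 (by linarith [hp.2])⟩

/-- vertical endpoints (in units of the block height) -/
def loZ (n l s : ℕ) (side : Bool) : ℕ := if side then 8 * n * l + 4 * s + 2 else 8 * n * l
def hiZ (n l s : ℕ) (side : Bool) : ℕ :=
  if side then 8 * n * l + 8 * n else 8 * n * l + 4 * s + 2

lemma Phimap {q n L : ℕ} (hq : 1 ≤ q) (hn : 1 ≤ n) (hL : 1 ≤ L) {ρ : ℝ} (hρ : 0 < ρ) :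
    ∃ F : ℝ × ℝ ≃ ℝ × ℝ, Adm q F ∧
      (∀ p, |(F p).1 - p.1| ≤ 1 / (q * (2 * n ^ 2 : ℕ)) ∧ |(F p).2 - p.2| ≤ 2 / L) ∧
      ∀ (j : ℤ) (bb : ℕ), bb < 8 * n * L → ∀ u r : ℝ, |u| ≤ 1 - ρ → ρ ≤ r → r ≤ 1 - ρ →
        ∃ a : ℤ, a ≡ 4 * j + 1 - bb [ZMOD (8 * n)] ∧
          F (1 / (q * (2 * n ^ 2 : ℕ)) * (j + 1 / 2 + u / 2), -1 + 1 / (4 * n * L) * (bb + r)) =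
          (1 / (q * (2 * n ^ 2 : ℕ)) * (j + 1 / 2 - u / 2), -1 + 1 / (4 * n * L) * (a + 1 - r)) := by
  have hn0 : (0 : ℝ) < n := by exact_mod_cast hn
  have hL0 : (0 : ℝ) < L := by exact_mod_cast hL
  set bh : ℝ := 1 / (4 * n * L) with hbh
  have hbh0 : 0 < bh := by positivity
  have hbhn : bh * (8 * n) = 2 / L := by rw [hbh]; field_simp; ring
  have hbhL : bh * (8 * n * L) = 2 := by rw [hbh]; field_simp; ring
  have hs2 : ∀ x : ℕ, x % (2 * n) < 2 * n := fun x => Nat.mod_lt _ (by omega)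
  have hP : 1 ≤ 2 * n ^ 2 := by have := Nat.one_le_pow 2 n hn; omega
  have hloZ : ∀ l x b, 8 * n * l ≤ loZ n l (x % (2 * n)) b := by
    intro l x b; unfold loZ; split <;> omega
  have hhiZ : ∀ l x b, hiZ n l (x % (2 * n)) b ≤ 8 * n * l + 8 * n := by
    intro l x b; have := hs2 x; unfold hiZ; split <;> omega
  have hlh : ∀ l x b, loZ n l (x % (2 * n)) b < hiZ n l (x % (2 * n)) b := by
    intro l x b; have := hs2 x; unfold hiZ loZ; split <;> omega
  have hlh' : ∀ l x b, hiZ n l (x % (2 * n)) b ≤ loZ n l (x % (2 * n)) b + 8 * n := by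
    intro l x b; have := hs2 x; unfold hiZ loZ; split <;> omega
  have hltop : ∀ l, l < L → 8 * n * l + 8 * n ≤ 8 * n * L := by
    intro l hl
    have : l + 1 ≤ L := hl
    calc 8 * n * l + 8 * n = 8 * n * (l + 1) := by ring
      _ ≤ _ := Nat.mul_le_mul_left _ this
  have hρ' : 0 < ρ / (4 * n) := by positivity
  obtain ⟨F, hF, hdisp, hev⟩ := gridMap (ι := ℕ × ℕ × Bool) hq hP
    (Finset.range (2 * n ^ 2) ×ˢ Finset.range L ×ˢ Finset.univ)
    (fun i => i.1) (fun i => -1 + bh * (loZ n i.2.1 (i.1 % (2 * n)) i.2.2 : ℕ))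
    (fun i => -1 + bh * (hiZ n i.2.1 (i.1 % (2 * n)) i.2.2 : ℕ))
    (fun _ => Real.pi) (2 / L) (by positivity)
    (fun i hi => by simpa using (Finset.mem_product.1 hi).1)
    (fun i hi => by
      have : (0 : ℝ) ≤ bh * (loZ n i.2.1 (i.1 % (2 * n)) i.2.2 : ℕ) := by positivity
      linarith)
    (fun i hi => by
      simp only [Finset.mem_product, Finset.mem_range] at hi
      have h1 := (hhiZ i.2.1 i.1 i.2.2).trans (hltop i.2.1 hi.2.1)
      have h2 : ((hiZ n i.2.1 (i.1 % (2 * n)) i.2.2 : ℕ) : ℝ) ≤ 8 * n * L := by exact_mod_cast h1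
      nlinarith)
    (fun i hi => by
      have h1 := hlh i.2.1 i.1 i.2.2
      have h2 : ((loZ n i.2.1 (i.1 % (2 * n)) i.2.2 : ℕ) : ℝ) <
        (hiZ n i.2.1 (i.1 % (2 * n)) i.2.2 : ℕ) := by exact_mod_cast h1
      nlinarith)
    (fun i hi => by
      have h1 := hlh' i.2.1 i.1 i.2.2
      have h2 : ((hiZ n i.2.1 (i.1 % (2 * n)) i.2.2 : ℕ) : ℝ) ≤
        (loZ n i.2.1 (i.1 % (2 * n)) i.2.2 : ℕ) + 8 * n := by exact_mod_cast h1
      rw [← hbhn]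
      nlinarith)
    (by
      rintro ⟨i, l, b⟩ h1 ⟨j, l', b'⟩ h2 rfl y h3 h4 h5 h6
      simp only at h3 h4 h5 h6
      have e1 : bh * ((loZ n l (i % (2 * n)) b : ℕ) : ℝ) < bh * (hiZ n l' (i % (2 * n)) b' : ℕ) := by
        linarith
      have e2 : bh * ((loZ n l' (i % (2 * n)) b' : ℕ) : ℝ) < bh * (hiZ n l (i % (2 * n)) b : ℕ) := by
        linarith
      have e3 := lt_of_mul_lt_mul_left e1 hbh0.le
      have e4 := lt_of_mul_lt_mul_left e2 hbh0.le
      have e5 : loZ n l (i % (2 * n)) b < hiZ n l' (i % (2 * n)) b' := by exact_mod_cast e3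
      have e6 : loZ n l' (i % (2 * n)) b' < hiZ n l (i % (2 * n)) b := by exact_mod_cast e4
      have g1 := hloZ l i b
      have g2 := hloZ l' i b'
      have g3 := hhiZ l i b
      have g4 := hhiZ l' i b'
      have k1 : 8 * n * l < 8 * n * (l' + 1) := by rw [mul_add]; omega
      have k2 : 8 * n * l' < 8 * n * (l + 1) := by rw [mul_add]; omega
      have k3 := Nat.lt_of_mul_lt_mul_left k1
      have k4 := Nat.lt_of_mul_lt_mul_left k2
      have k5 : l = l' := by omega
      subst k5
      have k6 : b = b' := by
        cases b <;> cases b' <;> simp [loZ, hiZ] at e5 e6 ⊢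
      rw [k6]) (coreS_compact hρ') (coreS_sub hρ')
  refine ⟨F, hF, hdisp, ?_⟩
  intro j bb hbb u r hu hr hr'
  set P : ℕ := 2 * n ^ 2 with hPd
  set i : ℕ := (j % P).toNat with hi
  have hPZ : (0 : ℤ) < P := by exact_mod_cast hP
  have hi0 : (i : ℤ) = j % P := Int.toNat_of_nonneg (Int.emod_nonneg _ hPZ.ne')
  have hiP : i < P := by
    have := Int.emod_lt_of_pos j hPZ
    omega
  have hjZ : j = i + P * (j / P) := by rw [hi0]; exact (Int.emod_add_mul_ediv j P).symm
  have hj : (j : ℝ) = i + P * (j / P : ℤ) := by exact_mod_cast hjZ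
  set s := i % (2 * n) with hs
  set l := bb / (8 * n) with hl
  have hlL : l < L := Nat.div_lt_of_lt_mul hbb
  have hbe : 8 * n * l + bb % (8 * n) = bb := Nat.div_add_mod _ _
  have hbe' : bb % (8 * n) < 8 * n := Nat.mod_lt _ (by omega)
  set e := bb % (8 * n) with he
  set side : Bool := decide (4 * s + 2 ≤ e) with hside
  have hlo : loZ n l s side ≤ bb := by
    unfold loZ; split
    · rename_i h; rw [hside, decide_eq_true_iff] at h; omega
    · omega
  have hhi : bb + 1 ≤ hiZ n l s side := by
    unfold hiZ; split
    · omega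
    · rename_i h; rw [hside, decide_eq_true_iff] at h; omega
  have hh1 := hlh l i side
  have hh2 := hlh' l i side
  rw [← hs] at hh1 hh2
  have hmod : ((hiZ n l s side : ℕ) : ℤ) + (loZ n l s side : ℕ) ≡ 4 * j + 2 [ZMOD (8 * n)] := by
    have h1 : (i : ℤ) = 2 * n * (i / (2 * n) : ℕ) + s := by
      rw [hs]; exact_mod_cast (Nat.div_add_mod i (2 * n)).symm
    have h2 : (4 * j + 2 : ℤ) = 4 * s + 2 + 8 * n * ((i / (2 * n) : ℕ) + n * (j / P)) := by
      conv_lhs => rw [hjZ, h1]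
      rw [hPd]; push_cast; ring
    rw [h2]
    have h3 : ((hiZ n l s side : ℕ) : ℤ) + (loZ n l s side : ℕ) =
        4 * s + 2 + 8 * n * (2 * l + if side then 1 else 0) := by
      cases side <;> simp [hiZ, loZ] <;> ring
    rw [h3]
    exact Int.modEq_iff_dvd.2 ⟨((i / (2 * n) : ℕ) + n * (j / P)) -
      (2 * l + if side then 1 else 0), by ring⟩
  have hev' := hev (i, l, side) (by simp [hiP, hlL]) (j / P) u
  simp only [← hs] at hev'
  clear_value side
  generalize hiZ n l s side = hz at *
  generalize loZ n l s side = lz at *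
  have r1 : (lz : ℝ) ≤ bb := by exact_mod_cast hlo
  have r2 : (bb : ℝ) + 1 ≤ hz := by exact_mod_cast hhi
  have r3 : (hz : ℝ) ≤ lz + 8 * n := by exact_mod_cast hh2
  set v : ℝ := ((bb + r) - (lz + hz) / 2) / ((hz - lz) / 2) with hv
  have hd : (0 : ℝ) < (hz - lz) / 2 := by linarith
  have hd' : ((hz : ℝ) - lz) / 2 ≤ 4 * n := by linarith
  have hvv : (hz - lz) / 2 * v = (bb + r) - (lz + hz) / 2 := by
    rw [hv]; exact mul_div_cancel₀ _ hd.ne'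
  have hx : ρ / (4 * n) ≤ ρ / ((hz - lz) / 2) := by gcongr
  have hx2 : ρ / ((hz - lz) / 2) * ((hz - lz) / 2) = ρ := div_mul_cancel₀ _ hd.ne'
  have hvle : |v| ≤ 1 - ρ / (4 * n) := by
    have : |v| ≤ 1 - ρ / ((hz - lz) / 2) := by
      rw [hv, abs_div, abs_of_pos hd, div_le_iff₀ hd, sub_mul, hx2, abs_le]
      constructor <;> linarith
    linarith
  have hule : |u| ≤ 1 - ρ / (4 * n) := by
    have : ρ / (4 * n) ≤ ρ := by
      have : (1 : ℝ) ≤ n := by exact_mod_cast hn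
      exact div_le_self hρ.le (by linarith)
    linarith
  have hcore : ((u, v) : ℝ × ℝ) ∈ coreS (ρ / (4 * n)) := ⟨hule, hvle⟩
  have key := hev' v hcore
  rw [half_turn (coreS_sub hρ' hcore)] at key
  simp only [Prod.neg_mk] at key
  refine ⟨(hz : ℤ) + lz - bb - 1, ?_, ?_⟩
  · have h3 := (hmod.sub_right (bb + 1))
    convert h3 using 1 <;> ring
  · clear_value v
    have f1 : (-1 + bh * lz + (-1 + bh * hz)) / 2 + (-1 + bh * hz - (-1 + bh * lz)) / 2 * v =
      -1 + bh * (bb + r) := by linear_combination bh * hvv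
    have f2 : (-1 + bh * lz + (-1 + bh * hz)) / 2 + (-1 + bh * hz - (-1 + bh * lz)) / 2 * -v =
      -1 + bh * (((hz : ℤ) + lz - bb - 1 : ℤ) + 1 - r) := by
      push_cast; linear_combination (-bh) * hvv
    rw [f1, f2] at key
    rw [hj, key]
    ext
    · simp only; ring
    · rfl

/-! ### Part G: the composed map -/

lemma Gmap {q n L B : ℕ} (hq : 1 ≤ q) (hn : 1 ≤ n) (hL : 1 ≤ L) (hB : 1 ≤ B)
    (W : ℕ → ℕ → Bool) {β : ℝ} (hβ : 0 < β) :
    ∃ G : ℝ × ℝ ≃ ℝ × ℝ, Adm q G ∧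
      (∀ p, |(G p).1 - p.1| ≤ 2 / n ∧ |(G p).2 - p.2| ≤ 4 / L) ∧
      ∀ (J : ℤ) (k : ℕ), k < 8 * n * L * B → ∀ u v : ℝ, |u| ≤ 49 / 50 → β ≤ |v| → |v| ≤ 1 - β →
        ∀ j : ℤ, j = 2 * J + (if xor (W k (J % (n ^ 2 : ℕ)).toNat) (decide (0 < v)) then 1 else 0) →
        ∀ P : ℝ × ℝ, P = (1 / (q * (n ^ 2 : ℕ)) * (J + 1 / 2 + u / 2),
            -1 + 2 / (8 * n * L * B : ℕ) * (k + 1 / 2 + v / 2)) →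
        ∃ a : ℤ, a ≡ 4 * j + 1 - (k / B : ℕ) [ZMOD (8 * n)] ∧
          1 / (q * (2 * n ^ 2 : ℕ)) * j < (G P).1 ∧ (G P).1 < 1 / (q * (2 * n ^ 2 : ℕ)) * (j + 1) ∧
          1 / (4 * n * L) * a < (G P).2 + 1 ∧ (G P).2 + 1 < 1 / (4 * n * L) * (a + 1) := by
  have hq0 : (0 : ℝ) < q := by exact_mod_cast hq
  have hq1 : (1 : ℝ) ≤ q := by exact_mod_cast hq
  have hn0 : (0 : ℝ) < n := by exact_mod_cast hn
  have hn1 : (1 : ℝ) ≤ n := by exact_mod_cast hn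
  have hL0 : (0 : ℝ) < L := by exact_mod_cast hL
  have hB0 : (0 : ℝ) < B := by exact_mod_cast hB
  have hB1 : (1 : ℝ) ≤ B := by exact_mod_cast hB
  have hN : 1 ≤ n ^ 2 := Nat.one_le_pow 2 n hn
  have hM : 1 ≤ 8 * n * L * B := by
    have : 0 < 8 * n * L * B := by positivity
    omega
  obtain ⟨ρ, hρ0, hρ1, H, hH, hHd, hHe⟩ := Hmap hq hN hM W hβ
  have hρB : 0 < ρ / (2 * B) := by positivity
  obtain ⟨F, hF, hFd, hFe⟩ := Phimap hq hn hL hρB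
  have hρB' : ρ / (2 * B) ≤ ρ := div_le_self hρ0.le (by linarith)
  refine ⟨H.trans F, hH.trans hF, ?_, ?_⟩
  · intro p
    rw [Equiv.trans_apply]
    have a := hHd p
    have b := hFd (H p)
    have c1 : (1 : ℝ) / (q * (n ^ 2 : ℕ)) ≤ 1 / n := by
      apply one_div_le_one_div_of_le hn0
      push_cast
      nlinarith [mul_le_mul hq1 (le_refl ((n : ℝ) ^ 2)) (by positivity) (by positivity)]
    have c2 : (1 : ℝ) / (q * (2 * n ^ 2 : ℕ)) ≤ 1 / n := by
      apply one_div_le_one_div_of_le hn0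
      push_cast
      nlinarith [mul_le_mul hq1 (le_refl ((n : ℝ) ^ 2)) (by positivity) (by positivity)]
    have c3 : (2 : ℝ) / (8 * n * L * B : ℕ) ≤ 2 / L := by
      apply div_le_div_of_nonneg_left (by norm_num) hL0
      have : L ≤ 8 * n * L * B := by
        calc L = 1 * L * 1 := by ring
          _ ≤ 8 * n * L * B := by gcongr; omega
      exact_mod_cast this
    have e1 : (2 : ℝ) / n = 1 / n + 1 / n := by ring
    have e2 : (4 : ℝ) / L = 2 / L + 2 / L := by ring
    have t1 := abs_sub_le (F (H p)).1 (H p).1 p.1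
    have t2 := abs_sub_le (F (H p)).2 (H p).2 p.2
    constructor <;> linarith [a.1, a.2, b.1, b.2]
  · intro J k hk u v hu hv hv' j hj P hP
    obtain ⟨u', v', h1, h2, h3, h4⟩ := hHe J k hk u v hu hv hv'
    rw [Equiv.trans_apply, hP, h1]
    set kk := k % B with hkk
    set bb := k / B with hbb
    have hkb : B * bb + kk = k := Nat.div_add_mod _ _
    have hkB : kk < B := Nat.mod_lt _ hB
    have hbL : bb < 8 * n * L := by
      rw [hbb]; apply Nat.div_lt_of_lt_mul; rw [mul_comm]; exact hk
    have hkR : (k : ℝ) = B * bb + kk := by exact_mod_cast hkb.symm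
    have hkB' : (kk : ℝ) + 1 ≤ B := by exact_mod_cast hkB
    have hkk0 : (0 : ℝ) ≤ kk := by positivity
    rw [abs_le] at h2
    set r : ℝ := (kk + 1 / 2 + v' / 2) / B with hr
    have hrl : ρ / (2 * B) ≤ r := by
      rw [hr, ← div_div]; gcongr; linarith [h2.1]
    have hru : r ≤ 1 - ρ / (2 * B) := by
      rw [hr, ← div_div, ← sub_nonneg]
      have : 1 - ρ / 2 / B - (kk + 1 / 2 + v' / 2) / B = (B - ρ / 2 - (kk + 1 / 2 + v' / 2)) / B := by
        field_simp
      rw [this]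
      apply div_nonneg _ hB0.le
      linarith [h2.2]
    have hY : -1 + 2 / ((8 * n * L * B : ℕ) : ℝ) * (k + 1 / 2 + v' / 2) =
        -1 + 1 / (4 * n * L) * (bb + r) := by
      rw [hkR, hr]; push_cast; field_simp; ring
    have hrr : 0 < r ∧ r < 1 := ⟨by linarith, by linarith⟩
    clear_value r
    obtain ⟨u'', hu'', hx⟩ : ∃ u'' : ℝ, |u''| ≤ 1 - ρ / (2 * B) ∧
        1 / (q * (n ^ 2 : ℕ) : ℝ) * (J + 1 / 2 + u' / 2) =
        1 / (q * (2 * n ^ 2 : ℕ)) * (j + 1 / 2 + u'' / 2) := by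
      cases hc : xor (W k (J % (n ^ 2 : ℕ)).toNat) (decide (0 < v))
      · have h5 := h4 hc
        rw [hc] at hj
        refine ⟨2 * u' + 1, abs_le.2 ⟨by linarith, by linarith⟩, ?_⟩
        rw [hj]; push_cast; field_simp; simp; ring
      · have h5 := h3 hc
        rw [hc] at hj
        refine ⟨2 * u' - 1, abs_le.2 ⟨by linarith, by linarith⟩, ?_⟩
        rw [hj]; push_cast; field_simp; simp; ring
    obtain ⟨a, ha, hFa⟩ := hFe j bb hbL u'' r hu'' hrl hru
    rw [hY, hx, hFa]
    rw [abs_le] at hu''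
    have p1 : (0 : ℝ) < 1 / (q * (2 * n ^ 2 : ℕ)) := by
      have : 0 < 2 * n ^ 2 := by positivity
      have : (0 : ℝ) < (2 * n ^ 2 : ℕ) := by exact_mod_cast this
      positivity
    have p2 : (0 : ℝ) < 1 / (4 * n * L) := by positivity
    refine ⟨a, ha, ?_, ?_, ?_, ?_⟩
    · exact mul_lt_mul_of_pos_left (by linarith [hu''.2]) p1
    · exact mul_lt_mul_of_pos_left (by linarith [hu''.1]) p1
    · have := mul_lt_mul_of_pos_left (show (a : ℝ) < a + 1 - r by linarith) p2
      simp only; linarith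
    · have := mul_lt_mul_of_pos_left (show (a : ℝ) + 1 - r < a + 1 by linarith) p2
      simp only; linarith

/-- separation of points with distinct subcolumn indices -/
lemma separation {q n L : ℕ} (hq : 1 ≤ q) (hn : 1 ≤ n) (hL : 1 ≤ L) {j j' a a' b : ℤ}
    {x y x' y' : ℝ} (hj : j ≠ j')
    (ha : a ≡ 4 * j + 1 - b [ZMOD (8 * n)]) (ha' : a' ≡ 4 * j' + 1 - b [ZMOD (8 * n)])
    (h1 : 1 / (q * (2 * n ^ 2 : ℕ)) * j < x) (h2 : x < 1 / (q * (2 * n ^ 2 : ℕ)) * (j + 1))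
    (h1' : 1 / (q * (2 * n ^ 2 : ℕ)) * j' < x') (h2' : x' < 1 / (q * (2 * n ^ 2 : ℕ)) * (j' + 1))
    (h3 : 1 / (4 * n * L) * a < y + 1) (h4 : y + 1 < 1 / (4 * n * L) * (a + 1))
    (h3' : 1 / (4 * n * L) * a' < y' + 1) (h4' : y' + 1 < 1 / (4 * n * L) * (a' + 1)) :
    (1 : ℝ) / (2 * q * L * n) ≤ |x - x'| ∨ (1 : ℝ) / (2 * q * L * n) ≤ |y - y'| := by
  have hq1 : (1 : ℝ) ≤ q := by exact_mod_cast hq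
  have hn1 : (1 : ℝ) ≤ n := by exact_mod_cast hn
  have hL1 : (1 : ℝ) ≤ L := by exact_mod_cast hL
  have hq0 : (0 : ℝ) < q := by linarith
  have hn0 : (0 : ℝ) < n := by linarith
  have hL0 : (0 : ℝ) < L := by linarith
  have hsub : a - a' ≡ 4 * (j - j') [ZMOD (8 * n)] := by
    have := ha.sub ha'
    convert this using 1; ring
  obtain ⟨m, hm⟩ := Int.modEq_iff_dvd.1 hsub
  by_cases haa : a = a'
  · left
    have hjj : j - j' = 2 * n * m := by rw [haa] at hm; linarith
    have hm0 : m ≠ 0 := by rintro rfl; apply hj; linarith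
    have hw : (1 : ℝ) / (2 * q * L * n) ≤ 1 / (q * (2 * n ^ 2 : ℕ)) * (2 * n - 1) := by
      push_cast
      rw [div_mul_eq_mul_div, div_le_div_iff₀ (by positivity) (by positivity)]
      have : (n : ℝ) ≤ (2 * n - 1) * L := by nlinarith
      nlinarith [mul_le_mul_of_nonneg_left this (show (0 : ℝ) ≤ 2 * q * n by positivity)]
    have hw0 : (0 : ℝ) < 1 / (q * (2 * n ^ 2 : ℕ)) := by push_cast; positivity
    set w : ℝ := 1 / (q * (2 * n ^ 2 : ℕ))
    refine hw.trans ?_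
    have hjR : (j : ℝ) - j' = 2 * n * m := by exact_mod_cast hjj
    rcases lt_or_gt_of_ne hm0 with h | h
    · have : (m : ℝ) ≤ -1 := by exact_mod_cast (by omega : m ≤ -1)
      rw [abs_sub_comm]
      refine le_trans ?_ (le_abs_self _)
      have : (2 * n - 1 : ℝ) ≤ j' - (j + 1) := by nlinarith
      have := mul_le_mul_of_nonneg_left this hw0.le
      linarith
    · have : (1 : ℝ) ≤ m := by exact_mod_cast (by omega : 1 ≤ m)
      refine le_trans ?_ (le_abs_self _)
      have : (2 * n - 1 : ℝ) ≤ j - (j' + 1) := by nlinarith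
      have := mul_le_mul_of_nonneg_left this hw0.le
      linarith
  · right
    have h4d : a - a' = 4 * (j - j' - 2 * n * m) := by linarith
    generalize j - j' - 2 * n * m = z at h4d
    have hz : z ≠ 0 := by rintro rfl; apply haa; linarith
    have hw : (1 : ℝ) / (2 * q * L * n) ≤ 1 / (4 * n * L) * 3 := by
      rw [div_mul_eq_mul_div, div_le_div_iff₀ (by positivity) (by positivity)]
      nlinarith [mul_pos hn0 hL0, mul_le_mul_of_nonneg_left hq1 (mul_pos hn0 hL0).le]
    have hw0 : (0 : ℝ) < 1 / (4 * n * L) := by positivity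
    set w : ℝ := 1 / (4 * n * L)
    refine hw.trans ?_
    have hzR : (a : ℝ) - a' = 4 * z := by exact_mod_cast h4d
    rcases lt_or_gt_of_ne hz with h | h
    · have : (z : ℝ) ≤ -1 := by exact_mod_cast (by omega : z ≤ -1)
      rw [abs_sub_comm]
      refine le_trans ?_ (le_abs_self _)
      have : (3 : ℝ) ≤ a' - (a + 1) := by linarith
      have := mul_le_mul_of_nonneg_left this hw0.le
      linarith
    · have : (1 : ℝ) ≤ z := by exact_mod_cast (by omega : 1 ≤ z)
      refine le_trans ?_ (le_abs_self _)
      have : (3 : ℝ) ≤ a - (a' + 1) := by linarith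
      have := mul_le_mul_of_nonneg_left this hw0.le
      linarith

/-! ### Part H: test functions -/

def toC (p : ℝ × ℝ) : ℂ := ⟨p.1, p.2⟩

lemma toC_dist (a b : ℝ × ℝ) : dist (toC a) (toC b) = euclDist a b := by
  rw [Complex.dist_eq_re_im]; rfl

lemma toC_cont : Continuous toC := by
  have : toC = fun p => (p.1 : ℂ) + p.2 * Complex.I := by
    funext p; apply Complex.ext <;> simp [toC]
  rw [this]; fun_prop

lemma int_lower {f : ℝ → ℝ} (hf : Continuous f) {a b c d κ : ℝ} (hca : c ≤ a) (hab : a ≤ b)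
    (hbd : b ≤ d) (h0 : ∀ t, 0 ≤ f t) (h1 : ∀ t, a ≤ t → t ≤ b → κ ≤ f t) :
    κ * (b - a) ≤ ∫ t in c..d, f t := by
  have e1 : ∫ t in a..b, f t ≤ ∫ t in c..d, f t :=
    intervalIntegral.integral_mono_interval hca hab hbd
      (Filter.Eventually.of_forall h0) (hf.intervalIntegrable _ _)
  have e2 : ∫ t in a..b, κ ≤ ∫ t in a..b, f t :=
    intervalIntegral.integral_mono_on hab (by simp) (hf.intervalIntegrable _ _)
      (fun x hx => h1 x hx.1 hx.2)
  rw [intervalIntegral.integral_const, smul_eq_mul] at e2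
  linarith

lemma int_cols {f : ℝ → ℝ} (hf : Continuous f) {Q : ℕ} (hQ : 1 ≤ Q) :
    ∫ t in (0 : ℝ)..1, f t = ∑ J ∈ Finset.range Q,
      ∫ t in (1 / (Q : ℝ) * J)..(1 / (Q : ℝ) * (J + 1)), f t := by
  have hQ0 : (Q : ℝ) ≠ 0 := by positivity
  have := intervalIntegral.sum_integral_adjacent_intervals (f := f) (μ := volume)
    (a := fun J : ℕ => 1 / (Q : ℝ) * J) (n := Q) (fun k _ => hf.intervalIntegrable _ _)
  simp only [Nat.cast_add, Nat.cast_one, Nat.cast_zero, mul_zero] at this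
  rw [this, one_div_mul_cancel hQ0]

lemma test_function {g g' : ℝ → ℝ × ℝ} (hg : Continuous g) (hg' : Continuous g')
    (hper : ∀ t, g (t + 1) = g t + (1, 0)) {Q : ℕ} (hQ : 1 ≤ Q) {κ : ℝ} (hκ : 0 < κ)
    (D : ℤ → Prop) [DecidablePred D] (hD : ∀ J, D (J + Q) ↔ D J)
    (hcard : Q ≤ 8 * ((Finset.range Q).filter (fun J : ℕ => D J)).card)
    (hsep : ∀ (J J' : ℤ) (t t' : ℝ), D J → |t - 1 / Q * (J + 1 / 2)| ≤ 49 / 100 * (1 / Q) →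
      |t' - 1 / Q * (J' + 1 / 2)| ≤ 49 / 100 * (1 / Q) → κ ≤ euclDist (g t) (g' t')) :
    ∃ φ : ℝ × ℝ → ℝ, (∀ a b : ℝ × ℝ, |φ a - φ b| ≤ euclDist a b) ∧
      (∀ x s : ℝ, φ (x + 1, s) = φ (x, s)) ∧
      κ / 10 ≤ (∫ t in (0 : ℝ)..1, φ (g t)) - ∫ t in (0 : ℝ)..1, φ (g' t) := by
  have hQ0 : (0 : ℝ) < Q := by exact_mod_cast hQ
  set S₀ : Set ℝ := {t | ∃ J : ℤ, D J ∧ |t - 1 / Q * (J + 1 / 2)| ≤ 49 / 100 * (1 / Q)} with hS₀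
  set S : Set ℂ := (fun t => toC (g t)) '' S₀ with hS
  set Φ : ℂ → ℝ := fun z => max 0 (κ - Metric.infDist z S) with hΦ
  have hDm : ∀ J, D (J - Q) ↔ D J := by
    intro J; rw [← hD (J - Q)]; simp
  have hS1 : ∀ t, t ∈ S₀ → t + 1 ∈ S₀ := by
    rintro t ⟨J, h1, h2⟩
    refine ⟨J + Q, (hD J).2 h1, ?_⟩
    convert h2 using 2
    push_cast; field_simp; ring
  have hS2 : ∀ t, t ∈ S₀ → t - 1 ∈ S₀ := by
    rintro t ⟨J, h1, h2⟩
    refine ⟨J - Q, (hDm J).2 h1, ?_⟩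
    convert h2 using 2
    push_cast; field_simp; ring
  have hgC : ∀ t, toC (g (t + 1)) = toC (g t) + 1 := by
    intro t; rw [hper]; apply Complex.ext <;> simp [toC]
  have himg : (fun z : ℂ => z + 1) '' S = S := by
    ext z
    constructor
    · rintro ⟨_, ⟨t, ht, rfl⟩, rfl⟩
      exact ⟨t + 1, hS1 t ht, hgC t⟩
    · rintro ⟨t, ht, rfl⟩
      refine ⟨toC (g (t - 1)), ⟨t - 1, hS2 t ht, rfl⟩, ?_⟩
      simp only
      rw [← hgC, sub_add_cancel]
  have hiso : Isometry (fun z : ℂ => z + 1) := isometry_add_right 1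
  have hΦper : ∀ z, Φ (z + 1) = Φ z := by
    intro z
    have := Metric.infDist_image hiso (x := z) (t := S)
    rw [himg] at this
    simp only [hΦ]
    rw [this]
  have hΦle : ∀ z w, Φ z ≤ Φ w + dist z w := by
    intro z w
    have h1 := Metric.infDist_le_infDist_add_dist (s := S) (x := w) (y := z)
    rw [dist_comm] at h1
    have h2 : 0 ≤ Φ w := le_max_left _ _
    have h3 : κ - Metric.infDist w S ≤ Φ w := le_max_right _ _
    exact max_le (by positivity) (by linarith)
  have hΦlip : ∀ z w, |Φ z - Φ w| ≤ dist z w := by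
    intro z w
    have h1 := hΦle z w
    have h2 := hΦle w z
    rw [dist_comm w z] at h2
    exact abs_le.2 ⟨by linarith, by linarith⟩
  have hΦc : Continuous Φ := continuous_const.max (continuous_const.sub (Metric.continuous_infDist_pt S))
  have hΦ0 : ∀ z, 0 ≤ Φ z := fun z => le_max_left _ _
  have hΦκ : ∀ z, Φ z ≤ κ := fun z => max_le hκ.le (by linarith [Metric.infDist_nonneg (x := z) (s := S)])
  have hf : Continuous fun t => Φ (toC (g t)) := hΦc.comp (toC_cont.comp hg)
  have hf' : Continuous fun t => Φ (toC (g' t)) := hΦc.comp (toC_cont.comp hg')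
  have hon : ∀ t ∈ S₀, Φ (toC (g t)) = κ := by
    intro t ht
    have : Metric.infDist (toC (g t)) S = 0 := Metric.infDist_zero_of_mem ⟨t, ht, rfl⟩
    simp only [hΦ]
    rw [this, sub_zero, max_eq_right hκ.le]
  have hSne : S.Nonempty := by
    have : 0 < ((Finset.range Q).filter (fun J : ℕ => D J)).card := by omega
    obtain ⟨J, hJ⟩ := Finset.card_pos.1 this
    have hJ' := (Finset.mem_filter.1 hJ).2
    exact ⟨_, 1 / Q * ((J : ℤ) + 1 / 2), ⟨J, hJ', by rw [sub_self, abs_zero]; positivity⟩, rfl⟩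
  have hoff : ∀ (t' : ℝ) (J' : ℤ), |t' - 1 / Q * (J' + 1 / 2)| ≤ 49 / 100 * (1 / Q) →
      Φ (toC (g' t')) = 0 := by
    intro t' J' ht'
    apply max_eq_left
    rw [sub_nonpos, Metric.le_infDist hSne]
    rintro _ ⟨t, ⟨J, h1, h2⟩, rfl⟩
    rw [dist_comm, toC_dist]
    exact hsep J J' t t' h1 h2 ht'
  refine ⟨fun p => Φ (toC p), fun a b => ?_, fun x s => ?_, ?_⟩
  · rw [← toC_dist]; exact hΦlip _ _
  · have : toC (x + 1, s) = toC (x, s) + 1 := by apply Complex.ext <;> simp [toC]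
    simp only [this, hΦper]
  · rw [int_cols hf hQ, int_cols hf' hQ]
    set w : ℝ := 1 / Q with hw
    have hw0 : 0 < w := by positivity
    have hwQ : w * Q = 1 := by rw [hw]; field_simp
    have l1 : ∀ J ∈ Finset.range Q, (if D (J : ℕ) then κ * (98 / 100 * w) else 0) ≤
        ∫ t in (w * J)..(w * (J + 1)), Φ (toC (g t)) := by
      intro J _
      split
      · rename_i hDJ
        have := int_lower hf (a := w * (J + 1 / 2) - 49 / 100 * w)
          (b := w * (J + 1 / 2) + 49 / 100 * w) (c := w * J) (d := w * (J + 1)) (κ := κ)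
          (by nlinarith) (by nlinarith) (by nlinarith) (fun t => hΦ0 _) (fun t h1 h2 => by
            rw [hon t ⟨J, hDJ, abs_le.2 ⟨by push_cast; linarith, by push_cast; linarith⟩⟩])
        refine le_trans (le_of_eq ?_) this
        ring
      · exact intervalIntegral.integral_nonneg (by nlinarith) (fun t _ => hΦ0 _)
    have l2 : ∀ J ∈ Finset.range Q, ∫ t in (w * J)..(w * (J + 1)), Φ (toC (g' t)) ≤
        κ * (2 / 100 * w) := by
      intro J _
      have hcf : Continuous fun t => κ - Φ (toC (g' t)) := continuous_const.sub hf'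
      have := int_lower (f := fun t => κ - Φ (toC (g' t))) hcf
          (a := w * (J + 1 / 2) - 49 / 100 * w)
          (b := w * (J + 1 / 2) + 49 / 100 * w) (c := w * J) (d := w * (J + 1)) (κ := κ)
          (by nlinarith) (by nlinarith) (by nlinarith) (fun t => by linarith [hΦκ (toC (g' t))])
          (fun t h1 h2 => by
            rw [hoff t J (abs_le.2 ⟨by push_cast; linarith, by push_cast; linarith⟩), sub_zero])
      rw [intervalIntegral.integral_sub (by simp) (hf'.intervalIntegrable _ _),
        intervalIntegral.integral_const, smul_eq_mul] at this
      nlinarith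
    have s1 := Finset.sum_le_sum l1
    have s2 := Finset.sum_le_sum l2
    rw [← Finset.sum_filter, Finset.sum_const, nsmul_eq_mul] at s1
    rw [Finset.sum_const, nsmul_eq_mul, Finset.card_range] at s2
    have hc : (Q : ℝ) ≤ 8 * ((Finset.range Q).filter (fun J : ℕ => D J)).card := by
      exact_mod_cast hcard
    have hc2 : (Q : ℝ) / 8 * (κ * (98 / 100 * w)) ≤
      ((Finset.range Q).filter (fun J : ℕ => D J)).card * (κ * (98 / 100 * w)) := by
      apply mul_le_mul_of_nonneg_right (by linarith) (by positivity)
    have e1 : (Q : ℝ) / 8 * (κ * (98 / 100 * w)) = 98 / 800 * κ := by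
      linear_combination (98 / 800 * κ) * hwQ
    have e2 : (Q : ℝ) * (κ * (2 / 100 * w)) = 2 / 100 * κ := by
      linear_combination (2 / 100 * κ) * hwQ
    linarith

/-! ### Part I: separation of measures -/

/-- evaluation property of the composed map -/
def GoodEval (q n L B : ℕ) (W : ℕ → ℕ → Bool) (β : ℝ) (G : ℝ × ℝ ≃ ℝ × ℝ) : Prop :=
  ∀ (J : ℤ) (k : ℕ), k < 8 * n * L * B → ∀ u v : ℝ, |u| ≤ 49 / 50 → β ≤ |v| → |v| ≤ 1 - β →
        ∀ j : ℤ, j = 2 * J + (if xor (W k (J % (n ^ 2 : ℕ)).toNat) (decide (0 < v)) then 1 else 0) →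
        ∀ P : ℝ × ℝ, P = (1 / (q * (n ^ 2 : ℕ)) * (J + 1 / 2 + u / 2),
            -1 + 2 / (8 * n * L * B : ℕ) * (k + 1 / 2 + v / 2)) →
        ∃ a : ℤ, a ≡ 4 * j + 1 - (k / B : ℕ) [ZMOD (8 * n)] ∧
          1 / (q * (2 * n ^ 2 : ℕ)) * j < (G P).1 ∧ (G P).1 < 1 / (q * (2 * n ^ 2 : ℕ)) * (j + 1) ∧
          1 / (4 * n * L) * a < (G P).2 + 1 ∧ (G P).2 + 1 < 1 / (4 * n * L) * (a + 1)

lemma Adm.shift {q : ℕ} (hq : 1 ≤ q) {G : ℝ × ℝ ≃ ℝ × ℝ} (hG : Adm q G) (x y : ℝ) :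
    G (x + 1, y) = G (x, y) + (1, 0) := by
  have h : ∀ m : ℕ, G (x + m / q, y) = G (x, y) + ((m / q : ℝ), (0 : ℝ)) := by
    intro m
    induction m with
    | zero => ext <;> simp
    | succ m ih =>
      have e : x + ((m + 1 : ℕ) : ℝ) / q = (x + m / q) + 1 / q := by push_cast; ring
      rw [e, hG.comm, ih]
      ext <;> simp
      ring
  have hq0 : (q : ℝ) ≠ 0 := by positivity
  have := h q
  rwa [div_self hq0] at this

lemma le_euclDist {a b : ℝ × ℝ} {κ : ℝ} (h : κ ≤ |a.1 - b.1| ∨ κ ≤ |a.2 - b.2|) :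
    κ ≤ euclDist a b := by
  unfold euclDist
  rcases h with h | h
  · refine h.trans (Real.abs_le_sqrt ?_)
    nlinarith [sq_nonneg (a.2 - b.2)]
  · refine h.trans (Real.abs_le_sqrt ?_)
    nlinarith [sq_nonneg (a.1 - b.1)]

lemma euclDist_le {a b : ℝ × ℝ} {c d : ℝ} (h1 : |a.1 - b.1| ≤ c) (h2 : |a.2 - b.2| ≤ d) :
    euclDist a b ≤ c + d := by
  unfold euclDist
  have h3 := abs_nonneg (a.1 - b.1)
  have h4 := abs_nonneg (a.2 - b.2)
  refine Real.sqrt_le_iff.2 ⟨by linarith, ?_⟩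
  rw [← sq_abs (a.1 - b.1), ← sq_abs (a.2 - b.2)]
  nlinarith [mul_nonneg h3 h4, mul_nonneg (h3.trans h1) (h4.trans h2)]

/-- counting in a periodic range -/
lemma card_periodic (q N : ℕ) (p : ℕ → Prop) [DecidablePred p] :
    ((Finset.range (q * N)).filter (fun J => p (J % N))).card =
      q * ((Finset.range N).filter p).card := by
  rw [Finset.card_filter, Finset.card_filter]
  induction q with
  | zero => simp
  | succ q ih =>
    rw [add_mul, one_mul, Finset.sum_range_add, ih, add_mul, one_mul]
    congr 1
    apply Finset.sum_congr rfl
    intro x hx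
    rw [Nat.mul_comm q N, Nat.mul_add_mod, Nat.mod_eq_of_lt (Finset.mem_range.1 hx)]

/-- height with pair index `k` and relative position `v` -/
noncomputable def ht (M k : ℕ) (v : ℝ) : ℝ := -1 + 2 / (M : ℝ) * (k + 1 / 2 + v / 2)

lemma far {q n L B : ℕ} (hq : 1 ≤ q) (hn : 1 ≤ n) (hL : 1 ≤ L)
    {W : ℕ → ℕ → Bool} {β : ℝ} {G : ℝ × ℝ ≃ ℝ × ℝ} (hG : Adm q G)
    (hE : GoodEval q n L B W β G) {k k' : ℕ} (hk : k < 8 * n * L * B) (hk' : k' < 8 * n * L * B)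
    (hkk : k / B = k' / B) {v v' : ℝ} (hv : β ≤ |v|) (hv2 : |v| ≤ 1 - β)
    (hv' : β ≤ |v'|) (hv2' : |v'| ≤ 1 - β)
    (hcard : n ^ 2 ≤ 8 * ((Finset.range (n ^ 2)).filter (fun i =>
      xor (W k i) (decide (0 < v)) ≠ xor (W k' i) (decide (0 < v')))).card) :
    ∃ φ : ℝ × ℝ → ℝ, (∀ a b : ℝ × ℝ, |φ a - φ b| ≤ euclDist a b) ∧
      (∀ x s : ℝ, φ (x + 1, s) = φ (x, s)) ∧
      1 / (2 * q * L * n) / 10 ≤ (∫ t in (0 : ℝ)..1, φ (G (t, ht (8 * n * L * B) k v))) -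
        ∫ t in (0 : ℝ)..1, φ (G (t, ht (8 * n * L * B) k' v')) := by
  have hq0 : (0 : ℝ) < q := by exact_mod_cast hq
  have hn0 : (0 : ℝ) < n := by exact_mod_cast hn
  have hL0 : (0 : ℝ) < L := by exact_mod_cast hL
  have hN : 1 ≤ n ^ 2 := Nat.one_le_pow 2 n hn
  have hQ : 1 ≤ q * n ^ 2 := Nat.mul_pos hq hN
  have hGc : Continuous G := hG.area.sm.continuous
  set N := n ^ 2 with hNd
  have hN0 : (0 : ℝ) < N := by exact_mod_cast hN
  set D : ℤ → Prop := fun J => xor (W k (J % N).toNat) (decide (0 < v)) ≠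
    xor (W k' (J % N).toNat) (decide (0 < v')) with hD
  have hpt : ∀ (J : ℤ) (t : ℝ), |t - 1 / (q * N : ℕ) * (J + 1 / 2)| ≤ 49 / 100 * (1 / (q * N : ℕ)) →
      ∃ u : ℝ, |u| ≤ 49 / 50 ∧ t = 1 / (q * N) * (J + 1 / 2 + u / 2) := by
    intro J t h
    push_cast at h
    have hw0 : (0 : ℝ) < 1 / (q * N) := by positivity
    set w : ℝ := 1 / (q * N)
    refine ⟨2 * (t - w * (J + 1 / 2)) / w, ?_, ?_⟩
    · rw [abs_div, abs_mul, abs_of_pos hw0, div_le_iff₀ hw0]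
      norm_num
      linarith
    · field_simp
      ring
  refine test_function (g := fun t => G (t, ht (8 * n * L * B) k v))
    (g' := fun t => G (t, ht (8 * n * L * B) k' v')) (by fun_prop) (by fun_prop)
    (fun t => hG.shift hq _ _) hQ (by positivity) D ?_ ?_ ?_
  · intro J
    simp only [hD]
    have : (J + ((q * N : ℕ) : ℤ)) % N = J % N := by
      push_cast
      rw [mul_comm, Int.add_mul_emod_self_left]
    rw [this]
  · have := card_periodic q N (fun i => xor (W k i) (decide (0 < v)) ≠
      xor (W k' i) (decide (0 < v')))
    have e : ((Finset.range (q * N)).filter (fun J : ℕ => D J)) =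
      (Finset.range (q * N)).filter (fun J => (fun i => xor (W k i) (decide (0 < v)) ≠
      xor (W k' i) (decide (0 < v'))) (J % N)) := by
      apply Finset.filter_congr
      intro J _
      simp only [hD]
      have : ((J : ℤ) % N).toNat = J % N := by omega
      rw [this]
    rw [e, this]
    calc q * N ≤ q * _ := Nat.mul_le_mul_left q hcard
      _ = _ := by ring
  · intro J J' t t' hDJ ht1 ht2
    obtain ⟨u, hu, hu'⟩ := hpt J t ht1
    obtain ⟨u', hw, hw'⟩ := hpt J' t' ht2
    obtain ⟨a, a1, a2, a3, a4, a5⟩ := hE J k hk u v hu hv hv2 _ rfl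
      (t, ht (8 * n * L * B) k v) (by rw [hu']; rfl)
    obtain ⟨b, b1, b2, b3, b4, b5⟩ := hE J' k' hk' u' v' hw hv' hv2' _ rfl
      (t', ht (8 * n * L * B) k' v') (by rw [hw']; rfl)
    rw [← hkk] at b1
    refine le_euclDist (separation hq hn hL ?_ a1 b1 a2 a3 b2 b3 a4 a5 b4 b5)
    intro heq
    have hJJ : J = J' := by
      split_ifs at heq <;> omega
    subst hJJ
    have hDJ' : xor (W k (J % N).toNat) (decide (0 < v)) ≠
      xor (W k' (J % N).toNat) (decide (0 < v')) := hDJ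
    rw [← hNd] at heq
    revert heq hDJ'
    generalize xor (W k (J % N).toNat) (decide (0 < v)) = c1
    generalize xor (W k' (J % N).toNat) (decide (0 < v')) = c2
    cases c1 <;> cases c2 <;> simp

/-! ### Part J: counting -/

noncomputable def ham (N k : ℕ) (w : ℕ → Bool) : ℕ :=
  ((Finset.range N).filter (fun i => k.testBit i ≠ w i)).card

lemma ham_succ_low {N k : ℕ} (hk : k < 2 ^ N) (w : ℕ → Bool) :
    ham (N + 1) k w = ham N k w + if w N = false then 0 else 1 := by
  unfold ham
  rw [Finset.card_filter, Finset.card_filter, Finset.sum_range_succ, Nat.testBit_lt_two_pow hk]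
  congr 1
  cases w N <;> simp

lemma ham_succ_high {N k : ℕ} (hk : k < 2 ^ N) (w : ℕ → Bool) :
    ham (N + 1) (2 ^ N + k) w = ham N k w + if w N = false then 1 else 0 := by
  unfold ham
  rw [Finset.card_filter, Finset.card_filter, Finset.sum_range_succ, Nat.testBit_two_pow_add_eq,
    Nat.testBit_lt_two_pow hk]
  congr 1
  · apply Finset.sum_congr rfl
    intro i hi
    rw [Nat.testBit_two_pow_add_gt (Finset.mem_range.1 hi)]
  · cases w N <;> simp

lemma sum_ham (N : ℕ) (w : ℕ → Bool) (x : ℝ) :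
    ∑ k ∈ Finset.range (2 ^ N), x ^ ham N k w = (1 + x) ^ N := by
  induction N with
  | zero => simp [ham]
  | succ N ih =>
    rw [pow_succ, mul_two, Finset.sum_range_add]
    have e1 : ∑ k ∈ Finset.range (2 ^ N), x ^ ham (N + 1) k w =
        (∑ k ∈ Finset.range (2 ^ N), x ^ ham N k w) * x ^ (if w N = false then 0 else 1) := by
      rw [Finset.sum_mul]
      apply Finset.sum_congr rfl
      intro k hk
      rw [ham_succ_low (Finset.mem_range.1 hk), pow_add]
    have e2 : ∑ k ∈ Finset.range (2 ^ N), x ^ ham (N + 1) (2 ^ N + k) w =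
        (∑ k ∈ Finset.range (2 ^ N), x ^ ham N k w) * x ^ (if w N = false then 1 else 0) := by
      rw [Finset.sum_mul]
      apply Finset.sum_congr rfl
      intro k hk
      rw [ham_succ_high (Finset.mem_range.1 hk), pow_add]
    rw [e1, e2, ih, pow_succ]
    cases w N <;> simp <;> ring

lemma ball_card (N : ℕ) (w : ℕ → Bool) :
    (((Finset.range (2 ^ N)).filter (fun k => 8 * ham N k w < N)).card : ℝ) ≤ (3 / 2) ^ N := by
  set Bf := (Finset.range (2 ^ N)).filter (fun k => 8 * ham N k w < N)
  have h1 : (Bf.card : ℝ) * (5 / 6 : ℝ) ^ N ≤ (1 + (5 / 6 : ℝ) ^ 8) ^ N := by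
    rw [← sum_ham N w]
    calc (Bf.card : ℝ) * (5 / 6 : ℝ) ^ N = ∑ k ∈ Bf, (5 / 6 : ℝ) ^ N := by
          rw [Finset.sum_const, nsmul_eq_mul]
      _ ≤ ∑ k ∈ Bf, ((5 / 6 : ℝ) ^ 8) ^ ham N k w := by
          apply Finset.sum_le_sum
          intro k hk
          rw [← pow_mul]
          exact pow_le_pow_of_le_one (by norm_num) (by norm_num) (Finset.mem_filter.1 hk).2.le
      _ ≤ _ := by
          apply Finset.sum_le_sum_of_subset_of_nonneg (Finset.filter_subset _ _)
          intros; positivity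
  have h2 : (1 + (5 / 6 : ℝ) ^ 8) ^ N ≤ (3 / 2 : ℝ) ^ N * (5 / 6) ^ N := by
    rw [← mul_pow]
    exact pow_le_pow_left₀ (by positivity) (by norm_num) N
  exact le_of_mul_le_mul_right (h1.trans h2) (by positivity)

lemma count_measure {n L N : ℕ} (hn : 1 ≤ n) (hL : 1 ≤ L) {β : ℝ} (hβ : 0 < β) 
    {M : ℕ} (hM : M = 8 * n * L * 2 ^ N) (C : Set ℝ) (hC1 : C ⊆ Set.Icc (-1) 1)
    (hC : ∀ k k' : ℕ, k < M → k' < M → k / 2 ^ N = k' / 2 ^ N → ∀ v v' : ℝ, β ≤ |v| → |v| ≤ 1 - β →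
      β ≤ |v'| → |v'| ≤ 1 - β → decide (0 < v) = decide (0 < v') → ht M k v ∈ C → ht M k' v' ∈ C →
      8 * ham N (k % 2 ^ N) (fun i => (k' % 2 ^ N).testBit i) < N) :
    volume C ≤ ENNReal.ofReal (4 * β + 4 * (3 / 4) ^ N) := by
  classical
  have hMpos : 0 < M := by rw [hM]; positivity
  have hM0 : (0 : ℝ) < M := by exact_mod_cast hMpos
  set τ : ℝ := 2 / M with hτ
  have hτ0 : 0 < τ := by positivity
  have hτM : τ * M = 2 := by rw [hτ]; field_simp
  set Kbs : ℕ × Bool → Finset ℕ := fun x => (Finset.range M).filter (fun k => k / 2 ^ N = x.1 ∧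
    ∃ v : ℝ, β ≤ |v| ∧ |v| ≤ 1 - β ∧ decide (0 < v) = x.2 ∧ ht M k v ∈ C) with hKbs
  have hcard : ∀ x, (Kbs x).card ≤ ⌊(3 / 2 : ℝ) ^ N⌋₊ := by
    intro x
    apply Nat.le_floor
    rcases (Kbs x).eq_empty_or_nonempty with he | ⟨k', hk'⟩
    · rw [he]; simp; positivity
    · refine le_trans ?_ (ball_card N (fun i => (k' % 2 ^ N).testBit i))
      obtain ⟨a1, a2, v', a3, a4, a5, a6⟩ := Finset.mem_filter.1 hk'
      have : (Kbs x).card ≤ ((Finset.range (2 ^ N)).filter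
          (fun k => 8 * ham N k (fun i => (k' % 2 ^ N).testBit i) < N)).card := by
        apply Finset.card_le_card_of_injOn (fun k => k % 2 ^ N)
        · intro k hk
          obtain ⟨b1, b2, v, b3, b4, b5, b6⟩ := Finset.mem_filter.1 hk
          simp only [Finset.coe_filter, Set.mem_ofPred_eq, Finset.mem_range]
          exact ⟨Nat.mod_lt _ (by positivity), hC k k' (Finset.mem_range.1 b1)
            (Finset.mem_range.1 a1) (b2.trans a2.symm) v v' b3 b4 a3 a4 (b5.trans a5.symm) b6 a6⟩
        · intro k hk l hl hkl
          have b := (Finset.mem_filter.1 hk).2.1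
          have c := (Finset.mem_filter.1 hl).2.1
          simp only at hkl
          rw [← Nat.div_add_mod k (2 ^ N), ← Nat.div_add_mod l (2 ^ N), b, c, hkl]
      exact_mod_cast this
  set K : Finset ℕ := (Finset.range (8 * n * L) ×ˢ (Finset.univ : Finset Bool)).biUnion Kbs with hK
  have hKcard : (K.card : ℝ) ≤ 16 * n * L * (3 / 2) ^ N := by
    have h1 : K.card ≤ _ * _ := Finset.card_biUnion_le_card_mul _ _ _ (fun x _ => hcard x)
    rw [Finset.card_product, Finset.card_range, Finset.card_univ, Fintype.card_bool] at h1
    have h2 : (K.card : ℝ) ≤ 8 * n * L * 2 * ⌊(3 / 2 : ℝ) ^ N⌋₊ := by exact_mod_cast h1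
    have h3 := Nat.floor_le (show (0 : ℝ) ≤ (3 / 2) ^ N by positivity)
    calc (K.card : ℝ) ≤ 8 * n * L * 2 * ⌊(3 / 2 : ℝ) ^ N⌋₊ := h2
      _ ≤ 8 * n * L * 2 * (3 / 2) ^ N := by gcongr
      _ = _ := by ring
  set Z : ℕ → Set ℝ := fun k => Set.Icc (ht M k (-1)) (ht M k (-1 + β)) ∪
    (Set.Icc (ht M k (-β)) (ht M k β) ∪ Set.Icc (ht M k (1 - β)) (ht M k 1)) with hZ
  have hcover : C ⊆ (⋃ k ∈ Finset.range M, Z k) ∪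
      ⋃ k ∈ K, Set.Icc (-1 + τ * (k : ℝ)) (-1 + τ * (k + 1)) := by
    intro y hy
    obtain ⟨y1, y2⟩ := hC1 hy
    obtain ⟨k, hk, v, hv1, hv2, hyk⟩ : ∃ k < M, ∃ v : ℝ, -1 ≤ v ∧ v ≤ 1 ∧ y = ht M k v := by
      by_cases hy1 : y = 1
      · refine ⟨M - 1, by omega, 1, by norm_num, le_rfl, ?_⟩
        unfold ht
        rw [← hτ, Nat.cast_sub (by omega), hy1]
        push_cast
        linarith
      · have hx0 : 0 ≤ (y + 1) / τ := div_nonneg (by linarith) hτ0.le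
        have hx1 : (y + 1) / τ < M := by
          rw [div_lt_iff₀ hτ0, mul_comm, hτM]
          have := lt_of_le_of_ne y2 hy1
          linarith
        refine ⟨⌊(y + 1) / τ⌋₊, (Nat.floor_lt hx0).2 hx1,
          2 * ((y + 1) / τ - ⌊(y + 1) / τ⌋₊) - 1, ?_, ?_, ?_⟩
        · have := Nat.floor_le hx0; linarith
        · have := Nat.lt_floor_add_one ((y + 1) / τ); linarith
        · unfold ht
          rw [← hτ]
          have : τ * ((y + 1) / τ) = y + 1 := by field_simp
          linear_combination -this
    have hmono : ∀ a b : ℝ, a ≤ b → ht M k a ≤ ht M k b := by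
      intro a b hab; unfold ht; rw [← hτ]; nlinarith
    by_cases hgood : β ≤ |v| ∧ |v| ≤ 1 - β
    · right
      rw [Set.mem_iUnion₂]
      refine ⟨k, ?_, ?_⟩
      · rw [hK, Finset.mem_biUnion]
        refine ⟨(k / 2 ^ N, decide (0 < v)), ?_, ?_⟩
        · simp only [Finset.mem_product, Finset.mem_range, Finset.mem_univ, and_true]
          apply Nat.div_lt_of_lt_mul
          rw [mul_comm, ← hM]; exact hk
        · exact Finset.mem_filter.2 ⟨Finset.mem_range.2 hk, rfl, v, hgood.1, hgood.2, rfl, hyk ▸ hy⟩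
      · rw [hyk]
        unfold ht
        rw [← hτ]
        constructor <;> nlinarith
    · left
      rw [Set.mem_iUnion₂]
      refine ⟨k, Finset.mem_range.2 hk, ?_⟩
      rw [not_and_or, not_le, not_le] at hgood
      rw [hyk]
      rcases hgood with h | h
      · rw [abs_lt] at h
        exact Or.inr (Or.inl ⟨hmono _ _ h.1.le, hmono _ _ h.2.le⟩)
      · rw [lt_abs] at h
        rcases h with h | h
        · exact Or.inr (Or.inr ⟨hmono _ _ h.le, hmono _ _ hv2⟩)
        · exact Or.inl ⟨hmono _ _ hv1, hmono _ _ (by linarith)⟩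
  have hvolht : ∀ (k : ℕ) (a b : ℝ), volume (Set.Icc (ht M k a) (ht M k b)) =
      ENNReal.ofReal (τ / 2 * (b - a)) := by
    intro k a b
    rw [Real.volume_Icc]
    congr 1
    unfold ht; rw [← hτ]; ring
  have hZvol : ∀ k ∈ Finset.range M, volume (Z k) ≤ ENNReal.ofReal (2 * β * τ) := by
    intro k _
    refine (measure_union_le _ _).trans ((add_le_add le_rfl (measure_union_le _ _)).trans ?_)
    rw [hvolht, hvolht, hvolht, ← ENNReal.ofReal_add (by nlinarith) (by nlinarith),
      ← ENNReal.ofReal_add (by nlinarith) (by nlinarith)]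
    apply le_of_eq
    congr 1
    ring
  have hKvol : ∀ k ∈ K, volume (Set.Icc (-1 + τ * (k : ℝ)) (-1 + τ * (k + 1))) ≤
      ENNReal.ofReal τ := by
    intro k _
    rw [Real.volume_Icc]
    apply le_of_eq; congr 1; ring
  have hR : (M : ℝ) * (2 * β * τ) + K.card * τ ≤ 4 * β + 4 * (3 / 4) ^ N := by
    have e1 : (M : ℝ) * (2 * β * τ) = 4 * β := by linear_combination 2 * β * hτM
    have e2 : (K.card : ℝ) * τ ≤ 16 * n * L * (3 / 2) ^ N * τ := by gcongr
    have e3 : 16 * n * L * (3 / 2 : ℝ) ^ N * τ = 4 * (3 / 4) ^ N := by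
      have h34 : (3 / 4 : ℝ) ^ N = (3 / 2) ^ N / 2 ^ N := by rw [← div_pow]; norm_num
      have hn0 : (0 : ℝ) < n := by exact_mod_cast hn
      have hL0 : (0 : ℝ) < L := by exact_mod_cast hL
      rw [hτ, hM, h34]; push_cast; field_simp; ring
    linarith
  calc volume C ≤ volume ((⋃ k ∈ Finset.range M, Z k) ∪
      ⋃ k ∈ K, Set.Icc (-1 + τ * (k : ℝ)) (-1 + τ * (k + 1))) := measure_mono hcover
    _ ≤ volume (⋃ k ∈ Finset.range M, Z k) +
      volume (⋃ k ∈ K, Set.Icc (-1 + τ * (k : ℝ)) (-1 + τ * (k + 1))) := measure_union_le _ _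
    _ ≤ ∑ k ∈ Finset.range M, volume (Z k) +
      ∑ k ∈ K, volume (Set.Icc (-1 + τ * (k : ℝ)) (-1 + τ * (k + 1))) :=
        add_le_add (measure_biUnion_finset_le _ _) (measure_biUnion_finset_le _ _)
    _ ≤ ∑ k ∈ Finset.range M, ENNReal.ofReal (2 * β * τ) + ∑ k ∈ K, ENNReal.ofReal τ :=
        add_le_add (Finset.sum_le_sum hZvol) (Finset.sum_le_sum hKvol)
    _ = ENNReal.ofReal (M * (2 * β * τ) + K.card * τ) := by
        rw [Finset.sum_const, Finset.sum_const, Finset.card_range, nsmul_eq_mul, nsmul_eq_mul,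
          ENNReal.ofReal_add (by positivity) (by positivity),
          ENNReal.ofReal_mul (p := (M : ℝ)) (by positivity),
          ENNReal.ofReal_mul (p := (K.card : ℝ)) (by positivity), ENNReal.ofReal_natCast,
          ENNReal.ofReal_natCast]
    _ ≤ _ := ENNReal.ofReal_le_ofReal hR

/-! ### Part K: the choice of parameters and the final argument -/

lemma choose_n {ε c η₁ : ℝ} (hε : 0 < ε) (hc : 0 < c) (hη : 0 < η₁) :
    ∃ n : ℕ, 1 ≤ n ∧ 4 / ε ≤ n ∧ 1 / (c * n) < η₁ ∧
      5 / 2 * (3 / 4 : ℝ) ^ (n ^ 2) ≤ Real.exp (-(1 / (c * n)) ^ (-2 + ε)) := by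
  set l := Real.log (4 / 3) with hl
  have hl0 : 0 < l := Real.log_pos (by norm_num)
  have h1 : ∀ᶠ n : ℕ in Filter.atTop, 1 ≤ n := Filter.eventually_ge_atTop 1
  have hcast := tendsto_natCast_atTop_atTop (R := ℝ)
  have h2 := hcast.eventually_ge_atTop (4 / ε)
  have h3 := hcast.eventually_gt_atTop (1 / (c * η₁))
  have h4 := hcast.eventually_ge_atTop (2 * Real.log (5 / 2) / l)
  have h5 := ((tendsto_rpow_neg_atTop hε).comp hcast).eventually_lt_const
    (show 0 < l / 2 / c ^ (2 - ε) by positivity)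
  obtain ⟨n, h1, h2, h3, h4, h5⟩ := (h1.and (h2.and (h3.and (h4.and h5)))).exists
  have hn1 : (1 : ℝ) ≤ n := by exact_mod_cast h1
  have hn0 : (0 : ℝ) < n := by linarith
  refine ⟨n, h1, h2, ?_, ?_⟩
  · rw [div_lt_iff₀ (by positivity)] at h3 ⊢
    linarith [mul_comm η₁ (c * n), mul_comm c (n * η₁), show (n : ℝ) * (c * η₁) = η₁ * (c * n) by ring]
  · simp only [Function.comp] at h5
    rw [lt_div_iff₀ (by positivity)] at h5
    rw [div_le_iff₀ hl0] at h4
    have e1 : (1 / (c * n)) ^ (-2 + ε) = c ^ (2 - ε) * ((n : ℝ) ^ (-ε) * n ^ 2) := by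
      rw [one_div, Real.inv_rpow (by positivity), ← Real.rpow_neg (by positivity),
        Real.mul_rpow hc.le hn0.le, ← Real.rpow_natCast, ← Real.rpow_add hn0]
      congr 2 <;> push_cast <;> ring
    have e2 : 5 / 2 * (3 / 4 : ℝ) ^ (n ^ 2) = Real.exp (Real.log (5 / 2) - n ^ 2 * l) := by
      rw [Real.exp_sub, Real.exp_log (by norm_num),
        show (n : ℝ) ^ 2 * l = ((n ^ 2 : ℕ) : ℝ) * l by push_cast; ring, Real.exp_nat_mul, hl,
        Real.exp_log (by norm_num), show (3 / 4 : ℝ) = (4 / 3)⁻¹ by norm_num, inv_pow]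
      ring
    rw [e1, e2]
    apply Real.exp_le_exp.mpr
    have f1 : c ^ (2 - ε) * ((n : ℝ) ^ (-ε) * n ^ 2) ≤ l / 2 * n ^ 2 := by
      have : (n : ℝ) ^ (-ε) * c ^ (2 - ε) * n ^ 2 ≤ l / 2 * n ^ 2 := by gcongr
      linarith [show c ^ (2 - ε) * ((n : ℝ) ^ (-ε) * n ^ 2) =
        (n : ℝ) ^ (-ε) * c ^ (2 - ε) * n ^ 2 by ring]
    have f2 : (n : ℝ) * l ≤ n ^ 2 * l := mul_le_mul_of_nonneg_right (by nlinarith) hl0.le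
    linarith

theorem cylinder_emergence_lemma :
    ∃ ε₀ > (0 : ℝ), ∀ ε : ℝ, 0 < ε → ε < ε₀ → ∀ q : ℕ, 1 ≤ q → ∀ η₁ : ℝ, 0 < η₁ →
      ∃ η : ℝ, 0 < η ∧ η < η₁ ∧
      ∃ G : ℝ × ℝ ≃ ℝ × ℝ,
        ContDiff ℝ (⊤ : ℕ∞) ⇑G ∧ ContDiff ℝ (⊤ : ℕ∞) ⇑G.symm ∧
        MeasurePreserving G volume volume ∧
        (∀ x y : ℝ, G (x + 1 / q, y) = G (x, y) + ((1 / q : ℝ), (0 : ℝ))) ∧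
        (∃ δ > 0, ∀ x y : ℝ, 1 - δ ≤ |y| → G (x, y) = (x, y)) ∧
        (∀ p : ℝ × ℝ, euclDist (G p) p ≤ ε ∧ euclDist (G.symm p) p ≤ ε) ∧
        ∀ y ∈ Set.Icc (-1 : ℝ) 1,
          (1 / 2 : ℝ≥0∞) * volume {y' ∈ Set.Icc (-1 : ℝ) 1 |
              ∀ φ : ℝ × ℝ → ℝ, (∀ a b : ℝ × ℝ, |φ a - φ b| ≤ euclDist a b) →
                (∀ x s : ℝ, φ (x + 1, s) = φ (x, s)) →
                (∫ t in (0 : ℝ)..1, φ (G (t, y))) - (∫ t in (0 : ℝ)..1, φ (G (t, y'))) ≤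
                  3 * η} ≤
            ENNReal.ofReal (Real.exp (-η ^ (-2 + ε))) := by
  refine ⟨1, one_pos, fun ε hε _ q hq η₁ hη₁ => ?_⟩
  obtain ⟨L₀, hL₀⟩ := exists_nat_ge (8 / ε)
  have hL0 : (0 : ℝ) < L₀ := lt_of_lt_of_le (by positivity) hL₀
  set L := L₀
  have hL : 1 ≤ L := by exact_mod_cast hL0
  have hq0 : (0 : ℝ) < q := by exact_mod_cast hq
  obtain ⟨n, hn, hnε, hη, hexp⟩ := choose_n (c := 200 * q * L) hε (by positivity) hη₁
  have hn0 : (0 : ℝ) < n := by exact_mod_cast hn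
  set η : ℝ := 1 / (200 * q * L * n) with hηdef
  have hη0 : 0 < η := by positivity
  set β : ℝ := 1 / 4 * (3 / 4) ^ (n ^ 2) with hβdef
  have hβ : 0 < β := by positivity
  set W : ℕ → ℕ → Bool := fun k i => (k % 2 ^ (n ^ 2)).testBit i with hW
  obtain ⟨G, hG, hdisp, hE⟩ := Gmap (B := 2 ^ (n ^ 2)) hq hn hL Nat.one_le_two_pow W hβ
  have hE' : GoodEval q n L (2 ^ (n ^ 2)) W β G := hE
  have hsum : 2 / (n : ℝ) + 4 / L ≤ ε := by
    rw [div_le_iff₀ hε] at hL₀ hnε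
    have a1 : 2 / (n : ℝ) ≤ ε / 2 := by rw [div_le_iff₀ hn0]; linarith
    have a2 : 4 / (L : ℝ) ≤ ε / 2 := by rw [div_le_iff₀ hL0]; linarith
    linarith
  refine ⟨η, hη0, hη, G, hG.area.sm, hG.area.sm', hG.area.measurePreserving, hG.comm, hG.bdry,
    fun p => ⟨(euclDist_le (hdisp p).1 (hdisp p).2).trans hsum, ?_⟩, fun y hy => ?_⟩
  · have h := hdisp (G.symm p)
    rw [G.apply_symm_apply, abs_sub_comm, abs_sub_comm p.2] at h
    exact (euclDist_le h.1 h.2).trans hsum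
  · set C := {y' ∈ Set.Icc (-1 : ℝ) 1 |
              ∀ φ : ℝ × ℝ → ℝ, (∀ a b : ℝ × ℝ, |φ a - φ b| ≤ euclDist a b) →
                (∀ x s : ℝ, φ (x + 1, s) = φ (x, s)) →
                (∫ t in (0 : ℝ)..1, φ (G (t, y))) - (∫ t in (0 : ℝ)..1, φ (G (t, y'))) ≤
                  3 * η} with hCdef
    have hvol : volume C ≤ ENNReal.ofReal (4 * β + 4 * (3 / 4) ^ (n ^ 2)) := by
      refine count_measure (M := 8 * n * L * 2 ^ (n ^ 2)) hn hL hβ rfl C (fun z hz => hz.1) ?_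
      intro k k' hk hk' hkk v v' hv hv2 hv' hv2' hs hC1 hC2
      by_contra! hcon
      have hcard : n ^ 2 ≤ 8 * ((Finset.range (n ^ 2)).filter (fun i =>
          xor (W k i) (decide (0 < v)) ≠ xor (W k' i) (decide (0 < v')))).card := by
        have : (Finset.range (n ^ 2)).filter (fun i =>
          xor (W k i) (decide (0 < v)) ≠ xor (W k' i) (decide (0 < v'))) =
          (Finset.range (n ^ 2)).filter (fun i => (k % 2 ^ (n ^ 2)).testBit i ≠
            (k' % 2 ^ (n ^ 2)).testBit i) := by
          apply Finset.filter_congr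
          intro i _
          rw [hs, hW]
          simp
        rw [this]
        exact hcon
      obtain ⟨φ, hφL, hφp, hφ⟩ := far hq hn hL hG hE' hk hk' hkk hv hv2 hv' hv2' hcard
      have i2 := hC2.2 φ hφL hφp
      have i1 := hC1.2 (fun p => -φ p) (fun a b => by
        have := hφL b a
        rw [show -φ a - -φ b = φ b - φ a by ring]
        refine this.trans (le_of_eq ?_)
        unfold euclDist
        congr 1; ring) (fun x s => by simp only [hφp])
      simp only [intervalIntegral.integral_neg] at i1
      have hκ : 1 / (2 * q * L * n) / 10 = 10 * η := by rw [hηdef]; field_simp; norm_num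
      rw [hκ] at hφ
      linarith
    have h12 : (1 / 2 : ℝ≥0∞) = ENNReal.ofReal (1 / 2) := by
      rw [ENNReal.ofReal_div_of_pos (by norm_num)]; simp
    calc (1 / 2 : ℝ≥0∞) * volume C
        ≤ ENNReal.ofReal (1 / 2) * ENNReal.ofReal (4 * β + 4 * (3 / 4) ^ (n ^ 2)) := by
          rw [h12]; gcongr
      _ = ENNReal.ofReal (1 / 2 * (4 * β + 4 * (3 / 4) ^ (n ^ 2))) := by
          rw [ENNReal.ofReal_mul (by norm_num)]
      _ ≤ _ := by
          apply ENNReal.ofReal_le_ofReal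
          refine le_trans (le_of_eq ?_) hexp
          rw [hβdef]; ring
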